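/- arXiv:2212.04904 — 3 statements merged into one kernel-verified Lean document; each statement's English description precedes it below -/
import Mathlib

section
/- Let V be a uniformly bounded irreducible weight module for W_n ⊗ B with finite dimensional weight spaces. Then there exists a cofinite ideal J of B (i.e. dim(B/J) < ∞) such that (W_n ⊗ J)·V = 0. -/
open scoped TensorProduct

noncomputable section

namespace LoopWitt

/-- The standard pairing `(u | m)` between `ℂⁿ` and `ℤⁿ`. -/
def pairC {n : ℕ} (u : Fin n → ℂ) (m : Fin n → ℤ) : ℂ := ∑ i, u i * (m i : ℂ)

/-- The standard pairing on `ℂⁿ`. -/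
def pairCC {n : ℕ} (u lam : Fin n → ℂ) : ℂ := ∑ i, u i * lam i

/-- `ℤⁿ = K ⊕ ℤβ`. -/
def IsDirectSumDecomp {n : ℕ} (K : AddSubgroup (Fin n → ℤ)) (β : Fin n → ℤ) : Prop :=
  (∀ m : Fin n → ℤ, ∃ a ∈ K, ∃ d : ℤ, m = a + d • β) ∧ ∀ d : ℤ, d • β ∈ K → d = 0

/-- `r` lies in the positive part `K + ℕ₊ β` of `ℤⁿ`. -/
def posDeg {n : ℕ} (K : AddSubgroup (Fin n → ℤ)) (β : Fin n → ℤ) (r : Fin n → ℤ) : Prop :=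
  ∃ a ∈ K, ∃ d : ℤ, 1 ≤ d ∧ r = a + d • β

/-- A representation of the loop Witt algebra `Wₙ ⊗ B`, given by operators
`D u r b` (for `D(u,r) ⊗ b`, where `D(u,r) = Σ uᵢ tʳ dᵢ`), bilinear in `u` and `b`,
subject to the Witt bracket relations. -/
structure WittRep (n : ℕ) (B : Type*) [CommRing B] [Algebra ℂ B]
    (V : Type*) [AddCommGroup V] [Module ℂ V] where
  D : (Fin n → ℂ) → (Fin n → ℤ) → B → Module.End ℂ V
  D_add_u : ∀ u u' r b, D (u + u') r b = D u r b + D u' r b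
  D_smul_u : ∀ (c : ℂ) u r b, D (c • u) r b = c • D u r b
  D_add_b : ∀ u r b b', D u r (b + b') = D u r b + D u r b'
  D_smul_b : ∀ (c : ℂ) u r b, D u r (c • b) = c • D u r b
  comm_DD : ∀ u r b v s b',
    ⁅D u r b, D v s b'⁆ = D (pairC u s • v - pairC v r • u) (r + s) (b * b')

namespace WittRep

variable {n : ℕ} {B : Type*} [CommRing B] [Algebra ℂ B]
  {V : Type*} [AddCommGroup V] [Module ℂ V]

/-- The weight space of weight `lam` with respect to the Cartan subalgebra `H = ⊕ ℂ dᵢ`. -/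
def weightSpace (ρ : WittRep n B V) (lam : Fin n → ℂ) : Submodule ℂ V where
  carrier := {x | ∀ u, ρ.D u 0 1 x = pairCC u lam • x}
  add_mem' := by
    intro a b ha hb u
    rw [map_add, ha u, hb u, smul_add]
  zero_mem' := by intro u; simp
  smul_mem' := by
    intro c a ha u
    rw [map_smul, ha u, smul_comm]

/-- A weight module: the sum of the weight spaces is everything. -/
def IsWeightModule (ρ : WittRep n B V) : Prop :=
  (⨆ lam : Fin n → ℂ, ρ.weightSpace lam) = ⊤

/-- Uniformly bounded weight spaces. -/
def UniformlyBounded (ρ : WittRep n B V) : Prop :=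
  ∃ N : ℕ, ∀ lam, Module.rank ℂ ↥(ρ.weightSpace lam) ≤ (N : Cardinal)

/-- A Harish-Chandra module: a weight module with finite dimensional weight spaces. -/
def HarishChandra (ρ : WittRep n B V) : Prop :=
  ρ.IsWeightModule ∧ ∀ lam, FiniteDimensional ℂ ↥(ρ.weightSpace lam)

/-- A submodule invariant under all the operators. -/
def Invariant (ρ : WittRep n B V) (U : Submodule ℂ V) : Prop :=
  ∀ u r b, ∀ x ∈ U, ρ.D u r b x ∈ U

/-- Irreducibility. -/
def IsIrreducible (ρ : WittRep n B V) : Prop :=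
  (∃ x : V, x ≠ 0) ∧ ∀ U : Submodule ℂ V, ρ.Invariant U → U = ⊥ ∨ U = ⊤

/-- A single point evaluation module. -/
def IsSinglePointEval (ρ : WittRep n B V) : Prop :=
  ∃ η : B →ₐ[ℂ] ℂ, ∀ u r b, ρ.D u r b = η b • ρ.D u r 1

/-- Nontriviality of the action. -/
def IsNontrivial (ρ : WittRep n B V) : Prop := ∃ u r b x, ρ.D u r b x ≠ 0

/-- `z` is a highest weight vector generating the module, with respect to the
triangular decomposition determined by `ℤⁿ = K ⊕ ℤβ`. -/
def IsHWVector (ρ : WittRep n B V) (K : AddSubgroup (Fin n → ℤ)) (β : Fin n → ℤ)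
    (z : V) : Prop :=
  z ≠ 0 ∧ (∃ lam, z ∈ ρ.weightSpace lam) ∧
  (∀ u r b, posDeg K β r → ρ.D u r b z = 0) ∧
  ∀ U : Submodule ℂ V, ρ.Invariant U → z ∈ U → U = ⊤

/-- A highest weight module. -/
def IsHighestWeight (ρ : WittRep n B V) : Prop :=
  ∃ (K : AddSubgroup (Fin n → ℤ)) (β : Fin n → ℤ),
    IsDirectSumDecomp K β ∧ ∃ z, ρ.IsHWVector K β z

end WittRep

/-- A representation of the loop extended Witt algebra `𝔏_{S,n}(B) = (Wₙ ⋉ (S ⊗ Aₙ)) ⊗ B`,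
given by operators `D u r b` (for `D(u,r) ⊗ b`) and `E s m b` (for `s ⊗ tᵐ ⊗ b`),
suitably multilinear, subject to the bracket relations of `𝔏_{S,n}(B)`. -/
structure ExtWittRep (n : ℕ) (S : Type*) [AddCommGroup S] [Module ℂ S]
    (B : Type*) [CommRing B] [Algebra ℂ B]
    (V : Type*) [AddCommGroup V] [Module ℂ V] where
  D : (Fin n → ℂ) → (Fin n → ℤ) → B → Module.End ℂ V
  E : S → (Fin n → ℤ) → B → Module.End ℂ V
  D_add_u : ∀ u u' r b, D (u + u') r b = D u r b + D u' r b
  D_smul_u : ∀ (c : ℂ) u r b, D (c • u) r b = c • D u r b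
  D_add_b : ∀ u r b b', D u r (b + b') = D u r b + D u r b'
  D_smul_b : ∀ (c : ℂ) u r b, D u r (c • b) = c • D u r b
  E_add_s : ∀ s s' m b, E (s + s') m b = E s m b + E s' m b
  E_smul_s : ∀ (c : ℂ) s m b, E (c • s) m b = c • E s m b
  E_add_b : ∀ s m b b', E s m (b + b') = E s m b + E s m b'
  E_smul_b : ∀ (c : ℂ) s m b, E s m (c • b) = c • E s m b
  comm_DD : ∀ u r b v s b',
    ⁅D u r b, D v s b'⁆ = D (pairC u s • v - pairC v r • u) (r + s) (b * b')
  comm_DE : ∀ u r b s m b', ⁅D u r b, E s m b'⁆ = pairC u m • E s (m + r) (b * b')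
  comm_EE : ∀ s m b s' m' b', ⁅E s m b, E s' m' b'⁆ = 0

namespace ExtWittRep

variable {n : ℕ} {S : Type*} [AddCommGroup S] [Module ℂ S]
  {B : Type*} [CommRing B] [Algebra ℂ B]
  {V : Type*} [AddCommGroup V] [Module ℂ V]

/-- The weight space of the weight given by `lam` on `H` and the linear functional `c`
on `S ≅ S ⊗ t⁰ (⊗ 1)`, with respect to the Cartan subalgebra `H ⊕ (S ⊗ t⁰) (⊗ 1)`. -/
def weightSpace (ρ : ExtWittRep n S B V) (lam : Fin n → ℂ) (c : S →ₗ[ℂ] ℂ) :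
    Submodule ℂ V where
  carrier := {x | (∀ u, ρ.D u 0 1 x = pairCC u lam • x) ∧ ∀ s, ρ.E s 0 1 x = c s • x}
  add_mem' := by
    intro a b ha hb
    refine ⟨fun u => ?_, fun s => ?_⟩
    · rw [map_add, ha.1 u, hb.1 u, smul_add]
    · rw [map_add, ha.2 s, hb.2 s, smul_add]
  zero_mem' := by exact ⟨fun u => by simp, fun s => by simp⟩
  smul_mem' := by
    intro t a ha
    refine ⟨fun u => ?_, fun s => ?_⟩
    · rw [map_smul, ha.1 u, smul_comm]
    · rw [map_smul, ha.2 s, smul_comm]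

/-- A weight module: the weight spaces span. -/
def IsWeightModule (ρ : ExtWittRep n S B V) : Prop :=
  (⨆ p : (Fin n → ℂ) × (S →ₗ[ℂ] ℂ), ρ.weightSpace p.1 p.2) = ⊤

/-- Uniformly bounded weight spaces. -/
def UniformlyBounded (ρ : ExtWittRep n S B V) : Prop :=
  ∃ N : ℕ, ∀ lam c, Module.rank ℂ ↥(ρ.weightSpace lam c) ≤ (N : Cardinal)

/-- Harish-Chandra: a weight module with finite dimensional weight spaces. -/
def HarishChandra (ρ : ExtWittRep n S B V) : Prop :=
  ρ.IsWeightModule ∧ ∀ lam c, FiniteDimensional ℂ ↥(ρ.weightSpace lam c)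

/-- Invariant submodule. -/
def Invariant (ρ : ExtWittRep n S B V) (U : Submodule ℂ V) : Prop :=
  (∀ u r b, ∀ x ∈ U, ρ.D u r b x ∈ U) ∧ (∀ s m b, ∀ x ∈ U, ρ.E s m b x ∈ U)

/-- Irreducibility. -/
def IsIrreducible (ρ : ExtWittRep n S B V) : Prop :=
  (∃ x : V, x ≠ 0) ∧ ∀ U : Submodule ℂ V, ρ.Invariant U → U = ⊥ ∨ U = ⊤

/-- A single point evaluation module. -/
def IsSinglePointEval (ρ : ExtWittRep n S B V) : Prop :=
  ∃ η : B →ₐ[ℂ] ℂ, (∀ u r b, ρ.D u r b = η b • ρ.D u r 1) ∧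
    ∀ s m b, ρ.E s m b = η b • ρ.E s m 1

/-- Single point generalised evaluation module: the action factors through
`𝔤 ⊗ B/𝔪ᵏ` for some maximal ideal `𝔪` and some `k`. -/
def IsGenEval (ρ : ExtWittRep n S B V) : Prop :=
  ∃ 𝔪 : Ideal B, 𝔪.IsMaximal ∧ ∃ k : ℕ, ∀ b ∈ 𝔪 ^ k,
    (∀ u r, ρ.D u r b = 0) ∧ ∀ s m, ρ.E s m b = 0

/-- Nontriviality of the action. -/
def IsNontrivial (ρ : ExtWittRep n S B V) : Prop :=
  (∃ u r b x, ρ.D u r b x ≠ 0) ∨ ∃ s m b x, ρ.E s m b x ≠ 0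

/-- The submodule of vectors on which the whole Lie algebra acts trivially. -/
def trivVectors (ρ : ExtWittRep n S B V) : Submodule ℂ V where
  carrier := {x | (∀ u r b, ρ.D u r b x = 0) ∧ ∀ s m b, ρ.E s m b x = 0}
  add_mem' := by
    intro a b ha hb
    exact ⟨fun u r c => by rw [map_add, ha.1 u r c, hb.1 u r c, add_zero],
      fun s m c => by rw [map_add, ha.2 s m c, hb.2 s m c, add_zero]⟩
  zero_mem' := ⟨fun u r c => by simp, fun s m c => by simp⟩
  smul_mem' := by
    intro t a ha
    exact ⟨fun u r c => by rw [map_smul, ha.1 u r c, smul_zero],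
      fun s m c => by rw [map_smul, ha.2 s m c, smul_zero]⟩

/-- Highest weight vector for the triangular decomposition determined by `ℤⁿ = K ⊕ ℤβ`,
generating the whole module. -/
def IsHWVector (ρ : ExtWittRep n S B V) (K : AddSubgroup (Fin n → ℤ)) (β : Fin n → ℤ)
    (z : V) : Prop :=
  z ≠ 0 ∧ (∃ lam c, z ∈ ρ.weightSpace lam c) ∧
  (∀ u r b, posDeg K β r → ρ.D u r b z = 0) ∧
  (∀ s m b, posDeg K β m → ρ.E s m b z = 0) ∧
  ∀ U : Submodule ℂ V, ρ.Invariant U → z ∈ U → U = ⊤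

/-- Highest weight module. -/
def IsHighestWeight (ρ : ExtWittRep n S B V) : Prop :=
  ∃ (K : AddSubgroup (Fin n → ℤ)) (β : Fin n → ℤ),
    IsDirectSumDecomp K β ∧ ∃ z, ρ.IsHWVector K β z

/-- Invariance under the degree-`K` part `(𝔏_{S,n}(B))_K`. -/
def InvariantK (ρ : ExtWittRep n S B V) (K : AddSubgroup (Fin n → ℤ))
    (U : Submodule ℂ V) : Prop :=
  (∀ u, ∀ r ∈ K, ∀ b, ∀ x ∈ U, ρ.D u r b x ∈ U) ∧
    ∀ s, ∀ m ∈ K, ∀ b, ∀ x ∈ U, ρ.E s m b x ∈ U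

/-- The highest weight space: the `(𝔏_{S,n}(B))_K`-submodule generated by `z`. -/
def hwSpace (ρ : ExtWittRep n S B V) (K : AddSubgroup (Fin n → ℤ)) (z : V) :
    Submodule ℂ V :=
  sInf {U : Submodule ℂ V | z ∈ U ∧ ρ.InvariantK K U}

end ExtWittRep

end LoopWitt

namespace LoopWitt

theorem pairC_add_left {n : ℕ} (u v : Fin n → ℂ) (m : Fin n → ℤ) :
    pairC (u + v) m = pairC u m + pairC v m := by
  simp [pairC, add_mul, Finset.sum_add_distrib]

theorem pairC_sub_right {n : ℕ} (u : Fin n → ℂ) (m k : Fin n → ℤ) :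
    pairC u (m - k) = pairC u m - pairC u k := by
  simp [pairC, mul_sub, Finset.sum_sub_distrib]

theorem exists_pairC_ne_zero {n : ℕ} {s : Fin n → ℤ} (hs : s ≠ 0) :
    ∃ u : Fin n → ℂ, pairC u s ≠ 0 := by
  obtain ⟨i, hi⟩ := Function.ne_iff.mp hs
  exact ⟨Pi.single i 1, by simpa [pairC, Pi.single_apply] using hi⟩

/-- Two nonzero integral functionals are simultaneously nonzero at some vector. -/
theorem exists_pairC_ne_zero_and {n : ℕ} {s t : Fin n → ℤ} (hs : s ≠ 0) (ht : t ≠ 0) :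
    ∃ u : Fin n → ℂ, pairC u s ≠ 0 ∧ pairC u t ≠ 0 := by
  obtain ⟨u, hu⟩ := exists_pairC_ne_zero hs
  obtain ⟨v, hv⟩ := exists_pairC_ne_zero ht
  by_cases hut : pairC u t = 0
  · by_cases hvs : pairC v s = 0
    · exact ⟨u + v, by simpa [pairC_add_left, hvs] using hu,
        by simpa [pairC_add_left, hut] using hv⟩
    · exact ⟨v, hvs, hv⟩
  · exact ⟨u, hu, hut⟩

section Ideals

variable {B : Type*} [CommRing B] [Algebra ℂ B]

/-- Every element of `B` is integral modulo the ideal `I`. -/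
def IntegralModulo (I : Ideal B) : Prop :=
  ∀ b : B, ∃ p : Polynomial ℂ, p.Monic ∧ Polynomial.aeval b p ∈ I

theorem IntegralModulo.mono {I J : Ideal B} (hI : IntegralModulo I) (h : I ≤ J) :
    IntegralModulo J := fun b =>
  let ⟨p, hp, hb⟩ := hI b
  ⟨p, hp, h hb⟩

theorem IntegralModulo.mul {I J : Ideal B} (hI : IntegralModulo I) (hJ : IntegralModulo J) :
    IntegralModulo (I * J) := fun b => by
  obtain ⟨p, hp, hpb⟩ := hI b
  obtain ⟨q, hq, hqb⟩ := hJ b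
  exact ⟨p * q, hp.mul hq, by simpa using Ideal.mul_mem_mul hpb hqb⟩

theorem IntegralModulo.top : IntegralModulo (⊤ : Ideal B) := fun _ =>
  ⟨1, Polynomial.monic_one, trivial⟩

theorem IntegralModulo.prod {ι : Type*} (s : Finset ι) (I : ι → Ideal B)
    (h : ∀ i ∈ s, IntegralModulo (I i)) : IntegralModulo (∏ i ∈ s, I i) :=
  Finset.prod_induction I IntegralModulo (fun _ _ => IntegralModulo.mul)
    (by simpa using IntegralModulo.top) h

theorem IntegralModulo.pow {I : Ideal B} (hI : IntegralModulo I) (k : ℕ) :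
    IntegralModulo (I ^ k) := by
  simpa using IntegralModulo.prod (Finset.range k) (fun _ => I) fun _ _ => hI

theorem IntegralModulo.finiteDimensional [Algebra.FiniteType ℂ B] {I : Ideal B}
    (hI : IntegralModulo I) : FiniteDimensional ℂ (B ⧸ I) := by
  have : Algebra.IsIntegral ℂ (B ⧸ I) := ⟨fun x => by
    obtain ⟨b, rfl⟩ := Ideal.Quotient.mk_surjective x
    obtain ⟨p, hp, hb⟩ := hI b
    refine ⟨p, hp, ?_⟩
    have h : Ideal.Quotient.mkₐ ℂ I (Polynomial.aeval b p) = 0 :=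
      Ideal.Quotient.eq_zero_iff_mem.mpr hb
    rw [← Polynomial.aeval_algHom_apply] at h
    simpa [Polynomial.aeval_def] using h⟩
  exact Algebra.IsIntegral.finite

theorem integralModulo_of_ker {F : Type*} [AddCommGroup F] [Module ℂ F]
    [FiniteDimensional ℂ F] (I : Ideal B) (φ : B →ₗ[ℂ] F) (hφ : ∀ b, φ b = 0 → b ∈ I) :
    IntegralModulo I := fun b => by
  have : FiniteDimensional ℂ (B ⧸ LinearMap.ker φ) :=
    Module.Finite.equiv φ.quotKerEquivRange.symm
  have hle : LinearMap.ker φ ≤ I.restrictScalars ℂ := fun b hb => hφ b hb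
  have : FiniteDimensional ℂ (B ⧸ I) :=
    Module.Finite.of_surjective
      ((LinearMap.ker φ).mapQ (I.restrictScalars ℂ) LinearMap.id hle) (by
        intro x
        obtain ⟨y, rfl⟩ := Submodule.Quotient.mk_surjective _ x
        exact ⟨Submodule.Quotient.mk y, rfl⟩)
  obtain ⟨p, hp, h⟩ := Algebra.IsIntegral.isIntegral (R := ℂ) (Ideal.Quotient.mk I b)
  refine ⟨p, hp, Ideal.Quotient.eq_zero_iff_mem.mp ?_⟩
  have h' : Polynomial.aeval (Ideal.Quotient.mkₐ ℂ I b) p = 0 := h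
  rwa [Polynomial.aeval_algHom_apply] at h'

/-- If some power of `K` lies in an ideal of codimension at most `M`,
then already `K ^ M` does. -/
theorem pow_le_of_finrank_le {F : Type*} [AddCommGroup F] [Module ℂ F]
    [FiniteDimensional ℂ F] {M : ℕ} (hF : Module.finrank ℂ F ≤ M)
    (I K : Ideal B) (φ : B →ₗ[ℂ] F) (hφ : ∀ b, φ b = 0 ↔ b ∈ I)
    {m : ℕ} (hm : K ^ m ≤ I) : K ^ M ≤ I := by
  let f : ℕ → Submodule ℂ F := fun k => ((K ^ k).restrictScalars ℂ).map φ
  have hanti : ∀ k, f (k + 1) ≤ f k := fun k =>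
    Submodule.map_mono fun b hb => Ideal.pow_le_pow_right k.le_succ hb
  have hstab : ∀ k, f (k + 1) = f k → K ^ k ≤ I := by
    intro k hk
    have h1 : K ^ k ≤ K * K ^ k ⊔ I := by
      intro b hb
      have hb' : φ b ∈ f (k + 1) := hk ▸ Submodule.mem_map_of_mem hb
      obtain ⟨c, hc, hcb⟩ := hb'
      have hc' : c ∈ K * K ^ k := by rwa [← pow_succ']
      have : b - c ∈ I := (hφ _).mp (by rw [map_sub, hcb, sub_self])
      simpa using Submodule.add_mem_sup hc' this
    have h2 : ∀ j, K ^ k ≤ K ^ (j + k) ⊔ I := by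
      intro j
      induction j with
      | zero => simp
      | succ j ih =>
        refine h1.trans (sup_le ?_ le_sup_right)
        refine (Ideal.mul_mono_right ih).trans ?_
        rw [Ideal.mul_sup, ← pow_succ', add_right_comm]
        exact sup_le_sup_left Ideal.mul_le_right _
    exact (h2 m).trans (sup_le ((Ideal.pow_le_pow_right (Nat.le_add_right m k)).trans hm) le_rfl)
  have key : ∀ k, K ^ k ≤ I ∨ Module.finrank ℂ (f k) + k ≤ M := by
    intro k
    induction k with
    | zero => exact Or.inr ((Submodule.finrank_le _).trans hF)
    | succ k ih =>
      rcases ih with h | h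
      · exact Or.inl ((Ideal.pow_le_pow_right k.le_succ).trans h)
      · rcases (hanti k).eq_or_lt with heq | hlt
        · exact Or.inl ((Ideal.pow_le_pow_right k.le_succ).trans (hstab k heq))
        · have := Submodule.finrank_lt_finrank_of_lt hlt
          exact Or.inr (by omega)
  rcases key M with h | h
  · exact h
  · have h0 : f M = ⊥ := Submodule.finrank_eq_zero.mp (by omega)
    intro b hb
    have : φ b ∈ f M := Submodule.mem_map_of_mem hb
    exact (hφ b).mp (by simpa [h0] using this)

end Ideals

namespace WittRep

variable {n : ℕ} {B : Type*} [CommRing B] [Algebra ℂ B]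
  {V : Type*} [AddCommGroup V] [Module ℂ V]

theorem D_zero_u (ρ : WittRep n B V) (r : Fin n → ℤ) (b : B) : ρ.D 0 r b = 0 := by
  simpa using ρ.D_smul_u 0 0 r b

theorem D_zero_b (ρ : WittRep n B V) (u : Fin n → ℂ) (r : Fin n → ℤ) : ρ.D u r 0 = 0 := by
  simpa using ρ.D_smul_b 0 u r 0

theorem D_sub_u (ρ : WittRep n B V) (u v : Fin n → ℂ) (r : Fin n → ℤ) (b : B) :
    ρ.D (u - v) r b = ρ.D u r b - ρ.D v r b := by
  have := ρ.D_add_u (u - v) v r b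
  rw [sub_add_cancel] at this
  rw [this, add_sub_cancel_right]

theorem comm_DD_apply (ρ : WittRep n B V) (u v : Fin n → ℂ) (r s : Fin n → ℤ) (a b : B)
    (x : V) : ρ.D u r a (ρ.D v s b x) - ρ.D v s b (ρ.D u r a x) =
      pairC u s • ρ.D v (r + s) (a * b) x - pairC v r • ρ.D u (r + s) (a * b) x := by
  have := congrArg (fun f : Module.End ℂ V => f x) (ρ.comm_DD u r a v s b)
  simpa [Ring.lie_def, D_sub_u, D_smul_u] using this

theorem comm_cartan_apply (ρ : WittRep n B V) (u v : Fin n → ℂ) (r : Fin n → ℤ) (a b : B)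
    (x : V) : ρ.D v 0 a (ρ.D u r b x) - ρ.D u r b (ρ.D v 0 a x) =
      pairC v r • ρ.D u r (a * b) x := by
  simpa [pairC] using ρ.comm_DD_apply v u 0 r a b x

theorem D_mem_weightSpace (ρ : WittRep n B V) {lam : Fin n → ℂ} (u : Fin n → ℂ)
    (r : Fin n → ℤ) (b : B) {x : V} (hx : x ∈ ρ.weightSpace lam) :
    ρ.D u r b x ∈ ρ.weightSpace (lam + fun i => (r i : ℂ)) := by
  intro v
  have h := ρ.comm_cartan_apply u v r 1 b x
  rw [hx v, map_smul, one_mul, sub_eq_iff_eq_add] at h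
  rw [h, ← add_smul]
  congr 1
  simp [pairC, pairCC, mul_add, Finset.sum_add_distrib, add_comm]

theorem cartan_mem_weightSpace (ρ : WittRep n B V) {lam : Fin n → ℂ} (u : Fin n → ℂ)
    (b : B) {x : V} (hx : x ∈ ρ.weightSpace lam) : ρ.D u 0 b x ∈ ρ.weightSpace lam := by
  have h := ρ.D_mem_weightSpace u 0 b hx
  have h0 : (lam + fun i => (((0 : Fin n → ℤ) i : ℤ) : ℂ)) = lam := by ext; simp
  rwa [h0] at h

/-- For `r ≠ 0`, the elements `b` for which `D(u,r) ⊗ b` kills a weight space form an ideal. -/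
def annihilator (ρ : WittRep n B V) (lam u : Fin n → ℂ) {r : Fin n → ℤ} (hr : r ≠ 0) :
    Ideal B where
  carrier := {b | ∀ x ∈ ρ.weightSpace lam, ρ.D u r b x = 0}
  add_mem' := fun ha hb x hx => by simp [D_add_b, ha x hx, hb x hx]
  zero_mem' := fun x _ => by simp [D_zero_b]
  smul_mem' := fun c b hb x hx => by
    obtain ⟨v, hv⟩ := exists_pairC_ne_zero hr
    have h := ρ.comm_cartan_apply u v r c b x
    rw [hb x hx, hb _ (ρ.cartan_mem_weightSpace v c hx), map_zero, sub_zero] at h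
    exact (smul_eq_zero.mp h.symm).resolve_left hv

/-- The action of `D(u,r) ⊗ b`, linear in `b`, between two weight spaces. -/
def weightMap (ρ : WittRep n B V) (lam u : Fin n → ℂ) (r : Fin n → ℤ) :
    B →ₗ[ℂ] ρ.weightSpace lam →ₗ[ℂ] ρ.weightSpace (lam + fun i => (r i : ℂ)) where
  toFun b := (ρ.D u r b).restrict fun _ hx => ρ.D_mem_weightSpace u r b hx
  map_add' a b := by ext x; simp [D_add_b]
  map_smul' c b := by ext x; simp [D_smul_b]

theorem weightMap_eq_zero_iff (ρ : WittRep n B V) (lam u : Fin n → ℂ) {r : Fin n → ℤ}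
    (hr : r ≠ 0) (b : B) : ρ.weightMap lam u r b = 0 ↔ b ∈ ρ.annihilator lam u hr := by
  constructor
  · intro h x hx
    exact congrArg Subtype.val (LinearMap.congr_fun h ⟨x, hx⟩)
  · intro h
    ext x
    exact h x x.2

/-- If `D(·,r) ⊗ a` and `D(·,s) ⊗ b` kill `x`, then so does `D(·,r+s) ⊗ ab`,
provided `r ≠ s` and `s ≠ 0`. -/
theorem D_mul_apply_eq_zero (ρ : WittRep n B V) {r s : Fin n → ℤ} (hrs : r ≠ s) (hs : s ≠ 0)
    {a b : B} {x : V} (ha : ∀ u, ρ.D u r a x = 0) (hb : ∀ u, ρ.D u s b x = 0)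
    (w : Fin n → ℂ) : ρ.D w (r + s) (a * b) x = 0 := by
  obtain ⟨p, hp, hp'⟩ := exists_pairC_ne_zero_and hs (sub_ne_zero.mpr hrs.symm)
  have hcomm : ∀ v, pairC p s • ρ.D v (r + s) (a * b) x =
      pairC v r • ρ.D p (r + s) (a * b) x := fun v => by
    have h := ρ.comm_DD_apply p v r s a b x
    rw [ha, hb, map_zero, map_zero, sub_zero] at h
    exact sub_eq_zero.mp h.symm
  have hself : ρ.D p (r + s) (a * b) x = 0 := by
    have h := sub_eq_zero.mpr (hcomm p)
    rw [← sub_smul, ← pairC_sub_right] at h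
    exact (smul_eq_zero.mp h).resolve_left hp'
  have h := hcomm w
  rw [hself, smul_zero] at h
  exact (smul_eq_zero.mp h).resolve_left hp

/-- Every operator of degree `r` with coefficient in `I` kills the weight space of `lam`. -/
def Kills (ρ : WittRep n B V) (lam : Fin n → ℂ) (I : Ideal B) (r : Fin n → ℤ) : Prop :=
  ∀ b ∈ I, ∀ u, ∀ x ∈ ρ.weightSpace lam, ρ.D u r b x = 0

theorem Kills.mono {ρ : WittRep n B V} {lam : Fin n → ℂ} {I J : Ideal B} {r : Fin n → ℤ}
    (h : ρ.Kills lam I r) (hJ : J ≤ I) : ρ.Kills lam J r := fun b hb => h b (hJ hb)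

theorem Kills.add {ρ : WittRep n B V} {lam : Fin n → ℂ} {I J : Ideal B} {r s : Fin n → ℤ}
    (hI : ρ.Kills lam I r) (hJ : ρ.Kills lam J s) (hrs : r ≠ s) (hs : s ≠ 0) :
    ρ.Kills lam (I * J) (r + s) := by
  intro b hb u x hx
  induction hb using Submodule.mul_induction_on' with
  | mem_mul_mem a ha c hc =>
    exact ρ.D_mul_apply_eq_zero hrs hs (fun v => hI a ha v x hx) (fun v => hJ c hc v x hx) u
  | add a _ c _ iha ihc => simp [D_add_b, iha, ihc]

theorem exists_integralModulo_kills (ρ : WittRep n B V)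
    (hfd : ∀ lam, FiniteDimensional ℂ ↥(ρ.weightSpace lam)) (lam : Fin n → ℂ)
    {r : Fin n → ℤ} (hr : r ≠ 0) : ∃ I : Ideal B, IntegralModulo I ∧ ρ.Kills lam I r := by
  refine ⟨∏ i, ρ.annihilator lam (Pi.single i 1) hr, IntegralModulo.prod _ _ fun i _ =>
    integralModulo_of_ker _ (ρ.weightMap lam (Pi.single i 1) r) fun b hb =>
      (ρ.weightMap_eq_zero_iff lam _ hr b).mp hb, fun b hb u x hx => ?_⟩
  let f : (Fin n → ℂ) →ₗ[ℂ] V :=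
    { toFun := fun u => ρ.D u r b x
      map_add' := fun u v => by simp [D_add_u]
      map_smul' := fun c u => by simp [D_smul_u] }
  have hf : f = 0 := LinearMap.pi_ext' fun i => LinearMap.ext_ring
    ((Ideal.prod_le_inf.trans (Finset.inf_le (Finset.mem_univ i))) hb x hx)
  exact LinearMap.congr_fun hf u

theorem kills_pow_of_finrank_le (ρ : WittRep n B V)
    (hfd : ∀ lam, FiniteDimensional ℂ ↥(ρ.weightSpace lam)) {N : ℕ}
    (hN : ∀ lam, Module.finrank ℂ ↥(ρ.weightSpace lam) ≤ N) {lam : Fin n → ℂ}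
    {r : Fin n → ℤ} (hr : r ≠ 0) {K : Ideal B} {m : ℕ} (h : ρ.Kills lam (K ^ m) r) :
    ρ.Kills lam (K ^ (N * N)) r := by
  intro b hb u
  refine pow_le_of_finrank_le (M := N * N) ?_ (ρ.annihilator lam u hr) K (ρ.weightMap lam u r)
    (ρ.weightMap_eq_zero_iff lam u hr) (fun c hc => h c hc u) hb
  rw [Module.finrank_linearMap]
  exact Nat.mul_le_mul (hN _) (hN _)

section Degrees

variable {P : (Fin n → ℤ) → Prop}

/-- A set of degrees closed under sums of distinct nonzero elements and containing
`±eᵢ, ±2eᵢ` contains all nonzero multiples of `eᵢ`. -/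
theorem degree_single (hadd : ∀ r s, P r → P s → r ≠ s → s ≠ 0 → P (r + s)) (i : Fin n)
    (hgen : ∀ c ∈ ({1, 2, -1, -2} : Finset ℤ), P (Pi.single i c)) {c : ℤ} (hc : c ≠ 0) :
    P (Pi.single i c) := by
  have hstep : ∀ a e : ℤ, P (Pi.single i a) → P (Pi.single i e) → a ≠ e → e ≠ 0 →
      P (Pi.single i (a + e)) := fun a e ha he hae he0 => by
    rw [Pi.single_add]
    exact hadd _ _ ha he (fun h => hae (Pi.single_injective i h)) (by simpa using he0)
  have h1 := hgen 1 (by simp)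
  have h2 := hgen 2 (by simp)
  have h3 := hgen (-1) (by simp)
  have h4 := hgen (-2) (by simp)
  have hpos : ∀ k : ℕ, P (Pi.single i ((k : ℤ) + 2)) := fun k => by
    induction k with
    | zero => simpa using h2
    | succ k ih =>
      have := hstep _ 1 ih h1 (by omega) one_ne_zero
      rwa [show (k : ℤ) + 2 + 1 = ((k + 1 : ℕ) : ℤ) + 2 by push_cast; ring] at this
  have hneg : ∀ k : ℕ, P (Pi.single i (-(k : ℤ) - 2)) := fun k => by
    induction k with
    | zero => simpa using h4
    | succ k ih =>
      have := hstep _ (-1) ih h3 (by omega) (by norm_num)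
      rwa [show -(k : ℤ) - 2 + -1 = -((k + 1 : ℕ) : ℤ) - 2 by push_cast; ring] at this
  rcases lt_trichotomy c 0 with h | h | h
  · by_cases h' : c = -1
    · rwa [h']
    · have := hneg (-c - 2).toNat
      rwa [show -((-c - 2).toNat : ℤ) - 2 = c by omega] at this
  · exact absurd h hc
  · by_cases h' : c = 1
    · rwa [h']
    · have := hpos (c - 2).toNat
      rwa [show ((c - 2).toNat : ℤ) + 2 = c by omega] at this

/-- A set of degrees closed under sums of distinct nonzero elements and containing
all `±eᵢ, ±2eᵢ` contains every degree. -/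
theorem degree_all [Nonempty (Fin n)]
    (hadd : ∀ r s, P r → P s → r ≠ s → s ≠ 0 → P (r + s))
    (hgen : ∀ i, ∀ c ∈ ({1, 2, -1, -2} : Finset ℤ), P (Pi.single i c)) (r : Fin n → ℤ) :
    P r := by
  have hzero : P 0 := by
    obtain ⟨i⟩ := ‹Nonempty (Fin n)›
    have := hadd _ _ (hgen i 1 (by simp)) (hgen i (-1) (by simp))
      (fun h => by have := Pi.single_injective i h; omega) (by simp)
    rwa [← Pi.single_add, add_neg_cancel, Pi.single_zero] at this
  have key : ∀ t : Finset (Fin n), P (∑ i ∈ t, Pi.single i (r i)) := fun t => by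
    induction t using Finset.induction_on with
    | empty => simpa using hzero
    | insert i t hi ih =>
      rw [Finset.sum_insert hi, add_comm]
      by_cases hr : r i = 0
      · simpa [hr] using ih
      · refine hadd _ _ ih (degree_single hadd i (hgen i) hr) (fun h => hr ?_) (by simpa using hr)
        have := congrFun h i
        rw [Finset.sum_apply, Finset.sum_eq_zero fun j hj =>
          Pi.single_eq_of_ne (ne_of_mem_of_not_mem hj hi).symm _] at this
        simpa using this.symm
  simpa [Finset.univ_sum_single] using key Finset.univ

end Degrees

/-- Each weight space of a uniformly bounded module is killed by a cofinite ideal. -/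
theorem exists_integralModulo_kills_all [Nonempty (Fin n)] (ρ : WittRep n B V)
    (hub : ρ.UniformlyBounded) (hfd : ∀ lam, FiniteDimensional ℂ ↥(ρ.weightSpace lam))
    (lam : Fin n → ℂ) : ∃ J : Ideal B, IntegralModulo J ∧ ∀ r, ρ.Kills lam J r := by
  obtain ⟨N, hN⟩ := hub
  have hN' : ∀ mu, Module.finrank ℂ ↥(ρ.weightSpace mu) ≤ N := fun mu =>
    Module.finrank_le_of_rank_le (hN mu)
  choose I hI hIk using fun r : {r : Fin n → ℤ // r ≠ 0} =>
    ρ.exists_integralModulo_kills hfd lam r.2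
  let S : Finset (Fin n × ℤ) := Finset.univ ×ˢ {1, 2, -1, -2}
  let g : Fin n × ℤ → Ideal B := fun p =>
    if h : (Pi.single p.1 p.2 : Fin n → ℤ) ≠ 0 then I ⟨_, h⟩ else ⊤
  have hg : ∀ p, IntegralModulo (g p) := fun p => by
    by_cases h : (Pi.single p.1 p.2 : Fin n → ℤ) ≠ 0
    · simpa only [g, dif_pos h] using hI _
    · simpa only [g, dif_neg h] using IntegralModulo.top
  let K : Ideal B := ∏ p ∈ S, g p
  have hK : IntegralModulo K := IntegralModulo.prod S g fun p _ => hg p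
  have hgen : ∀ i, ∀ c ∈ ({1, 2, -1, -2} : Finset ℤ),
      ∃ m, ρ.Kills lam (K ^ m) (Pi.single i c) := fun i c hc => by
    have hne : (Pi.single i c : Fin n → ℤ) ≠ 0 := by
      rw [Ne, Pi.single_eq_zero_iff]
      rintro rfl
      simp at hc
    have hle : K ≤ g (i, c) := Ideal.prod_le_inf.trans
      (Finset.inf_le (Finset.mem_product.mpr ⟨Finset.mem_univ i, hc⟩))
    refine ⟨1, Kills.mono (hIk ⟨_, hne⟩) ?_⟩
    simpa only [g, dif_pos hne, pow_one] using hle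
  have hall := degree_all (P := fun r => ∃ m, ρ.Kills lam (K ^ m) r)
    (fun r s ⟨k, hk⟩ ⟨l, hl⟩ hrs hs => ⟨k + l, by simpa [pow_add] using hk.add hl hrs hs⟩) hgen
  obtain ⟨m, hm⟩ := hall 0
  refine ⟨K ^ (m + N * N), hK.pow _, fun r => ?_⟩
  by_cases hr : r = 0
  · subst hr
    exact hm.mono (Ideal.pow_le_pow_right (Nat.le_add_right _ _))
  · obtain ⟨k, hk⟩ := hall r
    exact (ρ.kills_pow_of_finrank_le hfd hN' hr hk).mono
      (Ideal.pow_le_pow_right (Nat.le_add_left _ _))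

/-- The vectors killed by all operators with coefficient in the ideal `J`. -/
def killedVectors (ρ : WittRep n B V) (J : Ideal B) : Submodule ℂ V where
  carrier := {x | ∀ b ∈ J, ∀ u r, ρ.D u r b x = 0}
  add_mem' := fun hx hy b hb u r => by rw [map_add, hx b hb, hy b hb, add_zero]
  zero_mem' := fun b _ u r => map_zero _
  smul_mem' := fun c x hx b hb u r => by rw [map_smul, hx b hb, smul_zero]

theorem killedVectors_invariant (ρ : WittRep n B V) (J : Ideal B) :
    ρ.Invariant (ρ.killedVectors J) := by
  intro v s c x hx b hb u r
  have h := ρ.comm_DD_apply u v r s b c x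
  have hbc : b * c ∈ J := J.mul_mem_right c hb
  rw [hx b hb, hx _ hbc, hx _ hbc] at h
  simpa using h

end WittRep

end LoopWitt

open LoopWitt

/-- A uniformly bounded irreducible weight `Wₙ ⊗ B`-module with finite
dimensional weight spaces is annihilated by `Wₙ ⊗ J` for some cofinite ideal `J` of `B`. -/
theorem stmt3 {n : ℕ} {B V : Type*}
    [CommRing B] [Algebra ℂ B] [Algebra.FiniteType ℂ B]
    [AddCommGroup V] [Module ℂ V]
    (ρ : WittRep n B V)
    (hw : ρ.IsWeightModule) (hub : ρ.UniformlyBounded)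
    (hfd : ∀ lam, FiniteDimensional ℂ ↥(ρ.weightSpace lam))
    (hirr : ρ.IsIrreducible) :
    ∃ J : Ideal B, FiniteDimensional ℂ (B ⧸ J) ∧
      ∀ b ∈ J, ∀ (u : Fin n → ℂ) (r : Fin n → ℤ), ρ.D u r b = 0 := by
  rcases isEmpty_or_nonempty (Fin n) with hn | hn
  · refine ⟨⊤, IntegralModulo.top.finiteDimensional, fun b _ u r => ?_⟩
    rw [Subsingleton.elim u 0, ρ.D_zero_u]
  obtain ⟨lam, hlam⟩ : ∃ lam, ρ.weightSpace lam ≠ ⊥ := by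
    by_contra! h
    obtain ⟨x, hx⟩ := hirr.1
    have hx' : x ∈ ⨆ lam, ρ.weightSpace lam := by rw [hw]; trivial
    simp only [h, iSup_bot, Submodule.mem_bot] at hx'
    exact hx hx'
  obtain ⟨J, hJ, hkill⟩ := ρ.exists_integralModulo_kills_all hub hfd lam
  have hle : ρ.weightSpace lam ≤ ρ.killedVectors J := fun x hx b hb u r => hkill r b hb u x hx
  have htop : ρ.killedVectors J = ⊤ :=
    (hirr.2 _ (ρ.killedVectors_invariant J)).resolve_left fun h => hlam (le_bot_iff.mp (h ▸ hle))
  refine ⟨J, hJ.finiteDimensional, fun b hb u r => LinearMap.ext fun x => ?_⟩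
  have hx : x ∈ ρ.killedVectors J := htop ▸ trivial
  exact hx b hb u r
end
end

section
/- Let n ≥ 1. Any non-trivial irreducible uniformly bounded weight module V for the loop extended Witt algebra 𝔏_{S,n}(B) = (W_n ⋉ (S ⊗ A_n)) ⊗ B can be regarded (after a complement of S acts trivially) as an irreducible module for 𝔏(B) = (W_n ⋉ A_n) ⊗ B or for W_n ⊗ B; furthermore, regarded as an 𝔏(B)- or W_n ⊗ B-module, V is a single point evaluation module. -/
open scoped TensorProduct

noncomputable section

open LoopWitt

section General

/-- Commuting with a power, when the commutator `y = [d, x]` commutes with `x`. -/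
lemma mul_pow_succ_of_commutator {A : Type*} [Ring A] {d x y : A}
    (hd : d * x = x * d + y) (hxy : Commute x y) (k : ℕ) :
    d * x ^ (k + 1) = x ^ (k + 1) * d + (k + 1) • (x ^ k * y) := by
  induction k with
  | zero => simpa using hd
  | succ k ih =>
    have e : x ^ (k + 1) * y = x ^ k * y * x := by
      rw [pow_succ, mul_assoc, hxy.eq, mul_assoc]
    rw [pow_succ, ← mul_assoc, ih, add_mul, mul_assoc, hd, smul_mul_assoc, ← e, mul_add,
      succ_nsmul _ (k + 1), ← mul_assoc]
    abel

lemma commutator_mul_pow_eq_zero {A : Type*} [Ring A] [Algebra ℂ A] {d x y : A}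
    (hd : d * x = x * d + y) (hxy : Commute x y) {k : ℕ} (hk : x ^ (k + 1) = 0) :
    y * x ^ k = 0 := by
  have h := mul_pow_succ_of_commutator hd hxy k
  rw [hk, mul_zero, zero_mul, zero_add] at h
  have h2 : ((k + 1 : ℕ) : ℂ) • (x ^ k * y) = 0 := by rw [Nat.cast_smul_eq_nsmul, ← h]
  rw [← (hxy.pow_left k).eq]
  exact (smul_eq_zero_iff_right (Nat.cast_ne_zero.mpr k.succ_ne_zero)).mp h2

/-- The derivative of a nilpotent element is nilpotent, in characteristic zero. -/
lemma isNilpotent_commutator {A : Type*} [Ring A] [Algebra ℂ A] {d x y z : A}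
    (hdx : d * x = x * d + y) (hdy : d * y = y * d + z)
    (hxy : Commute x y) (hyz : Commute y z) (hx : IsNilpotent x) :
    IsNilpotent y := by
  obtain ⟨m, hm⟩ := hx
  suffices H : ∀ m j : ℕ, x ^ m * y ^ j = 0 → IsNilpotent y from H m 0 (by simp [hm])
  intro m
  induction m with
  | zero => intro j hj; exact ⟨j, by simpa using hj⟩
  | succ m ih =>
    intro j hj
    apply ih (j + 2)
    have h1 := mul_pow_succ_of_commutator hdx hxy m
    have h2 := mul_pow_succ_of_commutator hdy hyz j
    have hj1 : x ^ (m + 1) * y ^ (j + 1) = 0 := by rw [pow_succ y, ← mul_assoc, hj, zero_mul]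
    have h3 : d * (x ^ (m + 1) * y ^ (j + 1)) =
        x ^ (m + 1) * y ^ (j + 1) * d + (j + 1) • (x ^ (m + 1) * y ^ j * z)
          + (m + 1) • (x ^ m * y ^ (j + 2)) := by
      rw [← mul_assoc, h1, add_mul, mul_assoc, h2, mul_add, mul_smul_comm, smul_mul_assoc,
        mul_assoc (x ^ m), ← pow_succ' y]
      simp only [mul_assoc]
    rw [hj1, hj, mul_zero, zero_mul, zero_mul, smul_zero, zero_add, zero_add] at h3
    have h4 : ((m + 1 : ℕ) : ℂ) • (x ^ m * y ^ (j + 2)) = 0 := by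
      rw [Nat.cast_smul_eq_nsmul, ← h3]
    exact (smul_eq_zero_iff_right (Nat.cast_ne_zero.mpr m.succ_ne_zero)).mp h4

lemma exists_pow_ne_zero_of_isNilpotent {A : Type*} [Ring A] [Nontrivial A] {x : A}
    (hx : IsNilpotent x) : ∃ k, x ^ k ≠ 0 ∧ x ^ (k + 1) = 0 := by
  classical
  have h0 : Nat.find hx ≠ 0 := fun h => by
    have := Nat.find_spec hx
    rw [h, pow_zero] at this
    exact one_ne_zero this
  obtain ⟨k, hk⟩ := Nat.exists_eq_succ_of_ne_zero h0
  exact ⟨k, Nat.find_min hx (by omega), by rw [← Nat.succ_eq_add_one, ← hk]; exact Nat.find_spec hx⟩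

variable {V : Type*} [AddCommGroup V] [Module ℂ V]

lemma pow_apply_eq_zero_of_finrank_le {f : Module.End ℂ V} {U : Submodule ℂ V}
    [FiniteDimensional ℂ U] (hf : ∀ x ∈ U, f x ∈ U) {N : ℕ} (hN : Module.finrank ℂ U ≤ N)
    {x : V} (hx : x ∈ U) {k : ℕ} (hk : (f ^ k) x = 0) : (f ^ N) x = 0 := by
  have key : ∀ j (y : U), (((f.restrict hf) ^ j) y : V) = (f ^ j) y := by
    intro j y
    rw [Module.End.pow_restrict j]; rfl
  have h1 : (⟨x, hx⟩ : U) ∈ LinearMap.ker ((f.restrict hf) ^ k) := by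
    rw [LinearMap.mem_ker]; ext; rw [key]; exact hk
  have h2 := Module.End.ker_pow_le_ker_pow_finrank (f.restrict hf) k h1
  rw [LinearMap.mem_ker] at h2
  have h3 := key (Module.finrank ℂ U) ⟨x, hx⟩
  rw [h2] at h3
  obtain ⟨j, rfl⟩ := Nat.exists_eq_add_of_le' hN
  rw [pow_add, Module.End.mul_apply, ← h3]; simp

lemma exists_mem_eigenvector {f : Module.End ℂ V} {U : Submodule ℂ V} [FiniteDimensional ℂ U]
    (hU : U ≠ ⊥) (hf : ∀ x ∈ U, f x ∈ U) : ∃ c : ℂ, ∃ x ∈ U, x ≠ 0 ∧ f x = c • x := by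
  have : Nontrivial U := Submodule.nontrivial_iff_ne_bot.mpr hU
  obtain ⟨c, hc⟩ := Module.End.exists_eigenvalue (f.restrict hf)
  obtain ⟨x, hx⟩ := hc.exists_hasEigenvector
  refine ⟨c, x, x.2, fun h => hx.2 (Subtype.ext h), ?_⟩
  have := congrArg Subtype.val hx.apply_eq_smul
  simpa using this

/-- Commuting endomorphisms stabilising a nonzero finite-dimensional subspace have a common
eigenvector in it. -/
lemma exists_mem_common_eigenvector {ι : Type*} {f : ι → Module.End ℂ V}
    (hc : ∀ i j, Commute (f i) (f j)) (U : Submodule ℂ V) [FiniteDimensional ℂ U]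
    (hU : U ≠ ⊥) (hf : ∀ i, ∀ x ∈ U, f i x ∈ U) :
    ∃ x ∈ U, x ≠ 0 ∧ ∃ χ : ι → ℂ, ∀ i, f i x = χ i • x := by
  induction hd : Module.finrank ℂ U using Nat.strong_induction_on generalizing U with
  | _ d ih =>
  by_cases hs : ∀ i, ∃ c : ℂ, ∀ x ∈ U, f i x = c • x
  · choose χ hχ using hs
    obtain ⟨x, hx, hx0⟩ := U.exists_mem_ne_zero_of_ne_bot hU
    exact ⟨x, hx, hx0, χ, fun i => hχ i x hx⟩
  · push Not at hs
    obtain ⟨i, hi⟩ := hs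
    obtain ⟨c, y, hyU, hy0, hy⟩ := exists_mem_eigenvector hU (hf i)
    obtain ⟨z, hzU, hz⟩ := hi c
    let U' : Submodule ℂ V := U ⊓ (f i).eigenspace c
    have hlt : U' < U := by
      refine lt_of_le_of_ne inf_le_left fun h => hz ?_
      have : z ∈ U' := h ▸ hzU
      exact Module.End.mem_eigenspace_iff.mp this.2
    have : FiniteDimensional ℂ U' := Submodule.finiteDimensional_of_le hlt.le
    obtain ⟨x, hx, hx0⟩ := ih _ (hd ▸ Submodule.finrank_lt_finrank_of_lt hlt) U'
      (fun h => hy0 (by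
        have : y ∈ U' := ⟨hyU, Module.End.mem_eigenspace_iff.mpr hy⟩
        rw [h] at this; exact this))
      (fun j x hx => ⟨hf j x hx.1, Module.End.mem_eigenspace_iff.mpr (by
        rw [← Module.End.mul_apply, (hc i j).eq, Module.End.mul_apply,
          Module.End.mem_eigenspace_iff.mp hx.2, map_smul])⟩) rfl
    exact ⟨x, hx.1, hx0⟩

/-- Finitely many commuting nilpotent endomorphisms stabilising a nonzero subspace have a
common kernel vector in it. -/
lemma exists_mem_common_kernel {ι : Type*} {f : ι → Module.End ℂ V}
    (hc : ∀ i j, Commute (f i) (f j)) (hn : ∀ i, IsNilpotent (f i)) {U : Submodule ℂ V}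
    (hU : U ≠ ⊥) (hf : ∀ i, ∀ x ∈ U, f i x ∈ U) (s : Finset ι) :
    ∃ x ∈ U, x ≠ 0 ∧ ∀ i ∈ s, f i x = 0 := by
  classical
  induction s using Finset.induction_on with
  | empty =>
    obtain ⟨x, hx, hx0⟩ := U.exists_mem_ne_zero_of_ne_bot hU
    exact ⟨x, hx, hx0, by simp⟩
  | insert i s _ ih =>
    obtain ⟨x, hx, hx0, hxs⟩ := ih
    have hex : ∃ k, (f i ^ k) x = 0 := by
      obtain ⟨k, hk⟩ := hn i
      exact ⟨k, by simp [hk]⟩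
    obtain ⟨k, hk⟩ : ∃ k, Nat.find hex = k + 1 := Nat.exists_eq_succ_of_ne_zero fun h => by
      have := Nat.find_spec hex
      rw [h] at this
      exact hx0 (by simpa using this)
    refine ⟨(f i ^ k) x, ?_, Nat.find_min hex (by omega), fun j hj => ?_⟩
    · clear hk
      induction k with
      | zero => simpa using hx
      | succ k ihk => rw [pow_succ', Module.End.mul_apply]; exact hf i _ ihk
    · rcases Finset.mem_insert.mp hj with rfl | hj
      · rw [← Module.End.mul_apply, ← pow_succ', ← hk]; exact Nat.find_spec hex
      · rw [← Module.End.mul_apply, ((hc j i).pow_right k).eq, Module.End.mul_apply, hxs j hj,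
          map_zero]

/-- At most `dim U` eigenvectors of `f` with distinct eigenvalues lie in `U`. -/
lemma card_le_finrank_of_eigenvectors {f : Module.End ℂ V} {U : Submodule ℂ V}
    [FiniteDimensional ℂ U] {ι : Type*} (s : Finset ι) {μ : ι → ℂ} (hμ : Set.InjOn μ s)
    (h : ∀ i ∈ s, ∃ x ∈ U, x ≠ 0 ∧ f x = μ i • x) : s.card ≤ Module.finrank ℂ U := by
  choose! x hxU hx0 hx using h
  have li : LinearIndependent ℂ (fun i : s => x i) :=
    Module.End.eigenvectors_linearIndependent' f (fun i : s => μ i)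
      (fun i j hij => Subtype.ext (hμ i.2 j.2 hij)) _
      (fun i => Module.End.hasEigenvector_iff.mpr
        ⟨Module.End.mem_eigenspace_iff.mpr (hx i i.2), hx0 i i.2⟩)
  have li' : LinearIndependent ℂ (fun i : s => (⟨x i, hxU i i.2⟩ : U)) :=
    LinearIndependent.of_comp U.subtype li
  simpa using li'.fintype_card_le_finrank

end General

section CofiniteIdeal

variable {B : Type*} [CommRing B] [Algebra ℂ B]

/-- A prime ideal of finite codimension is the kernel of a character. -/
lemma exists_ker_eq_of_isPrime {J : Ideal B} [J.IsPrime] [FiniteDimensional ℂ (B ⧸ J)] :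
    ∃ η : B →ₐ[ℂ] ℂ, RingHom.ker η = J := by
  have hb : Function.Bijective (algebraMap ℂ (B ⧸ J)) :=
    IsAlgClosed.algebraMap_bijective_of_isIntegral
  let e : ℂ ≃ₐ[ℂ] (B ⧸ J) := AlgEquiv.ofBijective (Algebra.ofId ℂ (B ⧸ J)) hb
  refine ⟨e.symm.toAlgHom.comp (Ideal.Quotient.mkₐ ℂ J), ?_⟩
  ext b
  simp [RingHom.mem_ker, Ideal.Quotient.eq_zero_iff_mem]

lemma finiteDimensional_quotient_of_le {I J : Ideal B} (h : I ≤ J)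
    [FiniteDimensional ℂ (B ⧸ I)] : FiniteDimensional ℂ (B ⧸ J) :=
  Module.Finite.of_surjective (Ideal.Quotient.factorₐ ℂ h).toLinearMap
    (Ideal.Quotient.factor_surjective h)

lemma finrank_quotient_le_of_mem_iff {F : Type*} [AddCommGroup F] [Module ℂ F]
    [FiniteDimensional ℂ F] {I : Ideal B} (Φ : B →ₗ[ℂ] F) (h : ∀ b, b ∈ I ↔ Φ b = 0) :
    FiniteDimensional ℂ (B ⧸ I) ∧ Module.finrank ℂ (B ⧸ I) ≤ Module.finrank ℂ F := by
  have hI : I.restrictScalars ℂ = LinearMap.ker Φ := by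
    ext b; exact h b
  let g : (B ⧸ I) →ₗ[ℂ] F := ((I.restrictScalars ℂ).liftQ Φ hI.le) ∘ₗ
    (Submodule.Quotient.restrictScalarsEquiv ℂ I).symm.toLinearMap
  have hg : Function.Injective g :=
    (LinearMap.ker_eq_bot.mp (Submodule.ker_liftQ_eq_bot _ Φ hI.le hI.ge)).comp
      (Submodule.Quotient.restrictScalarsEquiv ℂ I).symm.injective
  exact ⟨Module.Finite.of_injective g hg, LinearMap.finrank_le_finrank_of_injective hg⟩

/-- The character `η` occurs as an eigencharacter in `B ⧸ I` if `I ≤ ker η`. -/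
lemma exists_eigenvector_quotient [IsNoetherianRing B] {I : Ideal B}
    [FiniteDimensional ℂ (B ⧸ I)] {η : B →ₐ[ℂ] ℂ} (h : I ≤ RingHom.ker η) :
    ∃ b ∉ I, ∀ a, a * b - η a • b ∈ I := by
  have hmin : RingHom.ker η ∈ (Module.annihilator B (B ⧸ I)).minimalPrimes := by
    rw [Ideal.annihilator_quotient]
    refine ⟨⟨RingHom.ker_isPrime _, h⟩, fun J hJ hle => ?_⟩
    have := hJ.1
    have := finiteDimensional_quotient_of_le hJ.2
    obtain ⟨η', rfl⟩ := exists_ker_eq_of_isPrime (J := J)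
    intro b hb
    have h2 : b - algebraMap ℂ B (η' b) ∈ RingHom.ker η' := by simp [RingHom.mem_ker]
    have h3 := hle h2
    rw [RingHom.mem_ker] at hb h3 ⊢
    rw [map_sub, hb, AlgHom.commutes] at h3
    simpa using h3
  have hass := Module.associatedPrimes.minimalPrimes_annihilator_subset_associatedPrimes B
    (B ⧸ I) hmin
  obtain ⟨hp, y, hy⟩ := Submodule.isAssociatedPrime_iff.mp hass
  obtain ⟨b, rfl⟩ := Ideal.Quotient.mk_surjective y
  have key : ∀ a, a ∈ RingHom.ker η ↔ a * b ∈ I := by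
    intro a
    rw [hy, Submodule.mem_colon_singleton, ← Ideal.Quotient.eq_zero_iff_mem]
    rfl
  refine ⟨b, fun hb => ?_, fun a => ?_⟩
  · have := (key 1).mpr (by simpa using hb)
    rw [RingHom.mem_ker, map_one] at this
    exact one_ne_zero this
  · have := (key (a - algebraMap ℂ B (η a))).mp (by simp [RingHom.mem_ker])
    rwa [sub_mul, ← Algebra.smul_def] at this

/-- If all primes over a finite-codimensional ideal `I` contain `a`, then a power of `a`
bounded in terms of the codimension lies in `I`. -/
lemma pow_mem_of_forall_prime {I : Ideal B} [FiniteDimensional ℂ (B ⧸ I)] {d : ℕ}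
    (hd : Module.finrank ℂ (B ⧸ I) ≤ d) {a : B}
    (h : ∀ J : Ideal B, J.IsPrime → I ≤ J → a ∈ J) : a ^ d ∈ I := by
  have hr : a ∈ I.radical := by
    rw [Ideal.radical_eq_sInf, Submodule.mem_sInf]
    exact fun J hJ => h J hJ.2 hJ.1
  obtain ⟨k, hk⟩ := hr
  have hpow : ∀ j, (LinearMap.mulLeft ℂ (Ideal.Quotient.mk I a) ^ j) 1 =
      Ideal.Quotient.mk I (a ^ j) := by
    intro j; rw [LinearMap.pow_mulLeft, LinearMap.mulLeft_apply, mul_one, map_pow]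
  have h1 : (1 : B ⧸ I) ∈ LinearMap.ker (LinearMap.mulLeft ℂ (Ideal.Quotient.mk I a) ^ k) := by
    rw [LinearMap.mem_ker, hpow]; exact Ideal.Quotient.eq_zero_iff_mem.mpr hk
  have h2 := Module.End.ker_pow_le_ker_pow_finrank _ k h1
  rw [LinearMap.mem_ker, hpow, Ideal.Quotient.eq_zero_iff_mem] at h2
  exact I.mem_of_dvd (pow_dvd_pow a hd) h2

end CofiniteIdeal

section Counting

/-- The cube `[-c, c]ⁿ` in `ℤⁿ`. -/
def cube (n c : ℕ) : Finset (Fin n → ℤ) := Fintype.piFinset fun _ => Finset.Icc (-(c : ℤ)) c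

lemma mem_cube {n c : ℕ} {m : Fin n → ℤ} : m ∈ cube n c ↔ ∀ i, |m i| ≤ c := by
  simp [cube, abs_le]

lemma card_cube (n c : ℕ) : (cube n c).card = (2 * c + 1) ^ n := by
  have : ((c : ℤ) + 1 + c).toNat = 2 * c + 1 := by omega
  simp [cube, Fintype.card_piFinset, this]

/-- Many subsets of `ℤⁿ`, each of which meets almost every pair `{m, ρ - m}` for a suitable
`ρ`, have a point common to more than `N` of them. -/
lemma exists_card_filter_lt {n N : ℕ} (hn : 1 ≤ n) {κ : Type*} (K : Finset κ)
    (hK : 4 * N * 2 ^ n < K.card) (good : κ → (Fin n → ℤ) → Prop) (ρ : κ → Fin n → ℤ)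
    (ex : κ → Finset (Fin n → ℤ)) (hex : ∀ k, (ex k).card ≤ 3)
    (h : ∀ k ∈ K, ∀ m ∉ ex k, good k m ∨ good k (ρ k - m)) :
    ∃ m, ∃ K' ⊆ K, N < K'.card ∧ ∀ k ∈ K', good k m := by
  classical
  by_contra! hcon
  let c : ℕ := ∑ k ∈ K, ∑ i, (ρ k i).natAbs
  have hc : ∀ k ∈ K, ∀ i, |ρ k i| ≤ c := by
    intro k hk i
    rw [Int.abs_eq_natAbs, Nat.cast_le]
    exact (Finset.single_le_sum (f := fun i => (ρ k i).natAbs) (fun _ _ => Nat.zero_le _)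
      (Finset.mem_univ i)).trans
      (Finset.single_le_sum (f := fun k => ∑ i, (ρ k i).natAbs) (fun _ _ => Nat.zero_le _) hk)
  let a := (cube n (c + 3)).card
  let b := (cube n (c + 3 + c)).card
  have hab : b ≤ 2 ^ n * a := by
    simp only [a, b, card_cube, ← mul_pow]
    exact Nat.pow_le_pow_left (by omega) n
  have ha : 7 ≤ a := by
    simp only [a, card_cube]
    calc 7 ≤ 2 * (c + 3) + 1 := by omega
      _ = (2 * (c + 3) + 1) ^ 1 := (pow_one _).symm
      _ ≤ _ := Nat.pow_le_pow_right (by omega) hn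
  let G : κ → Finset (Fin n → ℤ) := fun k => (cube n (c + 3 + c)).filter (good k)
  have hG : ∀ k ∈ K, a ≤ 2 * (G k).card + 3 := by
    intro k hk
    have hsub : cube n (c + 3) ⊆ (G k ∪ (G k).image (fun m => ρ k - m)) ∪ ex k := by
      intro m hm
      rw [mem_cube] at hm
      by_cases hmx : m ∈ ex k
      · exact Finset.mem_union_right _ hmx
      refine Finset.mem_union_left _ ?_
      rcases h k hk m hmx with hg | hg
      · refine Finset.mem_union_left _ (Finset.mem_filter.mpr ⟨mem_cube.mpr fun i => ?_, hg⟩)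
        exact (hm i).trans (by push_cast; omega)
      · refine Finset.mem_union_right _ (Finset.mem_image.mpr ⟨ρ k - m,
          Finset.mem_filter.mpr ⟨mem_cube.mpr fun i => ?_, hg⟩, by simp⟩)
        have := abs_sub (ρ k i) (m i)
        have h1 := hm i
        have h2 := hc k hk i
        simp only [Pi.sub_apply]
        push_cast at h1 ⊢
        linarith
    calc a ≤ _ := Finset.card_le_card hsub
      _ ≤ _ := Finset.card_union_le _ _
      _ ≤ ((G k).card + (G k).card) + 3 := Nat.add_le_add
          ((Finset.card_union_le _ _).trans (Nat.add_le_add_left Finset.card_image_le _)) (hex k)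
      _ = _ := by ring
  have hsum : ∑ k ∈ K, (G k).card ≤ N * b := by
    have := Finset.sum_card_bipartiteAbove_eq_sum_card_bipartiteBelow (s := K)
      (t := cube n (c + 3 + c)) good
    simp only [Finset.bipartiteAbove, Finset.bipartiteBelow] at this
    rw [this, mul_comm, ← smul_eq_mul]
    refine Finset.sum_le_card_nsmul _ _ _ fun m _ => ?_
    by_contra! hlt
    obtain ⟨k, hk, hk'⟩ := hcon m _ (Finset.filter_subset _ _) hlt
    exact hk' (Finset.mem_filter.mp hk).2
  have h1 : K.card * a ≤ 2 * (N * b) + K.card * 3 := by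
    calc K.card * a = ∑ _k ∈ K, a := by simp
      _ ≤ ∑ k ∈ K, (2 * (G k).card + 3) := Finset.sum_le_sum hG
      _ = 2 * ∑ k ∈ K, (G k).card + K.card * 3 := by
          rw [Finset.sum_add_distrib, ← Finset.mul_sum]; simp
      _ ≤ _ := by gcongr
  have h2 : N * b ≤ N * (2 ^ n * a) := Nat.mul_le_mul_left _ hab
  have h3 : (4 * N * 2 ^ n + 1) * a ≤ K.card * a := Nat.mul_le_mul_right _ hK
  have h4 : K.card * 7 ≤ K.card * a := Nat.mul_le_mul_left _ ha
  nlinarith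

end Counting

/-- An irreducible uniformly bounded weight representation of the Lie algebra with elements
`X r p ⊗ b` (`r ∈ ℤⁿ`, `p ∈ P`, `b ∈ B`) and bracket
`[X r p ⊗ b, X s q ⊗ b'] = X (r + s) (⟨s, p⟩ q - ⟨r, q⟩ p) ⊗ b b'`. The extended loop Witt
algebra is the case `P = ℂⁿ × S`. -/
structure BoundedRep (n : ℕ) (P B V Λ : Type*) [AddCommGroup P] [Module ℂ P]
    [CommRing B] [Algebra ℂ B] [AddCommGroup V] [Module ℂ V] [AddCommGroup Λ] where
  pair : (Fin n → ℤ) →+ Module.Dual ℂ P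
  X : (Fin n → ℤ) → P →ₗ[ℂ] B →ₗ[ℂ] Module.End ℂ V
  mul_X : ∀ r s p q b b', X r p b * X s q b' =
    X s q b' * X r p b + X (r + s) (pair s p • q - pair r q • p) (b * b')
  irr : ∀ U : Submodule ℂ V, (∀ r p b, ∀ x ∈ U, X r p b x ∈ U) → U = ⊥ ∨ U = ⊤
  ι : (Fin n → ℤ) →+ Λ
  W : Λ → Submodule ℂ V
  N : ℕ
  rank_le : ∀ l, Module.rank ℂ (W l) ≤ N
  iSup_W : ⨆ l, W l = ⊤
  X_mem : ∀ r p b l, ∀ x ∈ W l, X r p b x ∈ W (l + ι r)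
  u₀ : P
  pair_u₀ : ∀ r, r ≠ 0 → pair r u₀ ≠ 0

namespace BoundedRep

variable {n : ℕ} {P B V Λ : Type*} [AddCommGroup P] [Module ℂ P]
    [CommRing B] [Algebra ℂ B] [AddCommGroup V] [Module ℂ V] [AddCommGroup Λ]
    (M : BoundedRep n P B V Λ)

lemma finiteDimensional_W (l : Λ) : FiniteDimensional ℂ (M.W l) :=
  Module.rank_lt_aleph0_iff.mp ((M.rank_le l).trans_lt Cardinal.natCast_lt_aleph0)

lemma finrank_W_le (l : Λ) : Module.finrank ℂ (M.W l) ≤ M.N :=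
  Module.finrank_le_of_rank_le (M.rank_le l)

lemma X_zero_mem (p : P) (b : B) {l : Λ} {x : V} (hx : x ∈ M.W l) : M.X 0 p b x ∈ M.W l := by
  simpa using M.X_mem 0 p b l x hx

lemma X_X_apply (r s : Fin n → ℤ) (p q : P) (b b' : B) (x : V) :
    M.X r p b (M.X s q b' x) = M.X s q b' (M.X r p b x) +
      M.X (r + s) (M.pair s p • q - M.pair r q • p) (b * b') x := by
  have := congrArg (fun f : Module.End ℂ V => f x) (M.mul_X r s p q b b')
  simpa using this

lemma X_zero_X_apply (r : Fin n → ℤ) (p q : P) (b b' : B) (x : V) :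
    M.X 0 p b (M.X r q b' x) = M.X r q b' (M.X 0 p b x) + M.pair r p • M.X r q (b * b') x := by
  rw [X_X_apply]; simp

lemma commute_X_zero (p q : P) (b b' : B) : Commute (M.X 0 p b) (M.X 0 q b') := by
  rw [commute_iff_eq, M.mul_X]
  simp

/-- Two operators agreeing on all weight spaces agree. -/
lemma end_eq_zero {f : Module.End ℂ V} (h : ∀ l, ∀ x ∈ M.W l, f x = 0) : f = 0 := by
  rw [← LinearMap.ker_eq_top, eq_top_iff, ← M.iSup_W]
  exact iSup_le fun l x hx => h l x hx

lemma exists_W_ne_bot [Nontrivial V] : ∃ l, M.W l ≠ ⊥ := by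
  by_contra! h
  have := M.iSup_W
  simp [h] at this

/-- The elements `p` with `⟨r, p⟩ ≠ 0` span `P`. -/
lemma forall_of_forall_pair_ne_zero {r : Fin n → ℤ} (hr : r ≠ 0) {Q : P → Prop}
    (hsub : ∀ p q, Q p → Q q → Q (p - q)) (h : ∀ p, M.pair r p ≠ 0 → Q p) (p : P) : Q p := by
  by_cases hp : M.pair r p = 0
  · have := hsub (p + M.u₀) M.u₀ (h _ (by rw [map_add, hp, zero_add]; exact M.pair_u₀ r hr))
      (h _ (M.pair_u₀ r hr))
    simpa using this
  · exact h p hp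

/-- An operator preserving the weight spaces that commutes with its commutators with the Lie
algebra has a single generalised eigenvalue. -/
lemma exists_pow_sub_eq_zero [Nontrivial V] {T : Module.End ℂ V}
    (hT : ∀ l, ∀ x ∈ M.W l, T x ∈ M.W l)
    (hc : ∀ r p b, Commute T (T * M.X r p b - M.X r p b * T)) :
    ∃ c : ℂ, (T - algebraMap ℂ _ c) ^ M.N = 0 := by
  obtain ⟨l, hl⟩ := M.exists_W_ne_bot
  have := M.finiteDimensional_W l
  obtain ⟨c, x, hxl, hx0, hx⟩ := exists_mem_eigenvector hl (hT l)
  refine ⟨c, ?_⟩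
  set S : Module.End ℂ V := T - algebraMap ℂ _ c with hS
  have hcS : ∀ r p b, S * M.X r p b = M.X r p b * S + (T * M.X r p b - M.X r p b * T) := by
    intro r p b
    rw [hS, sub_mul, mul_sub, Algebra.commutes c (M.X r p b)]; abel
  have hcomm : ∀ r p b, Commute S (T * M.X r p b - M.X r p b * T) := fun r p b =>
    (hc r p b).sub_left (Algebra.commute_algebraMap_left c _)
  let G : Submodule ℂ V := T.maxGenEigenspace c
  have hG : ∀ y, y ∈ G ↔ ∃ k, (S ^ k) y = 0 := fun y => Module.End.mem_maxGenEigenspace _ _ _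
  have hinv : ∀ r p b, ∀ y ∈ G, M.X r p b y ∈ G := by
    intro r p b y hy
    rw [hG] at hy ⊢
    obtain ⟨k, hk⟩ := hy
    refine ⟨k + 1, ?_⟩
    have e : ∀ j : ℕ, S ^ (j + 1) * M.X r p b = M.X r p b * S ^ (j + 1) +
        (j + 1) • ((T * M.X r p b - M.X r p b * T) * S ^ j) := by
      intro j
      have h := mul_pow_succ_of_commutator (d := - M.X r p b) (x := S)
        (y := T * M.X r p b - M.X r p b * T)
        (by rw [neg_mul, mul_neg, hcS]; abel) (hcomm r p b) j
      rw [((hcomm r p b).pow_left j).eq, neg_mul, mul_neg] at h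
      rw [eq_comm, ← sub_eq_zero] at h ⊢
      rw [← h]; abel
    have := congrArg (fun f : Module.End ℂ V => f y) (e k)
    simp only [Module.End.mul_apply, LinearMap.add_apply, LinearMap.smul_apply, hk, map_zero,
      smul_zero, add_zero] at this
    rw [this, pow_succ', Module.End.mul_apply, hk, map_zero, map_zero]
  have htop : G = ⊤ := (M.irr G hinv).resolve_left fun h => hx0 <| by
    have : x ∈ G := (hG x).mpr ⟨1, by simp [hS, hx]⟩
    rw [h] at this; exact this
  refine M.end_eq_zero fun l y hy => ?_
  have := M.finiteDimensional_W l
  obtain ⟨k, hk⟩ := (hG y).mp (htop ▸ Submodule.mem_top)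
  exact pow_apply_eq_zero_of_finrank_le (fun z hz => by
    simpa [hS] using (M.W l).sub_mem (hT l z hz) ((M.W l).smul_mem c hz)) (M.finrank_W_le l) hy hk

/-- Schur's lemma. -/
lemma exists_eq_algebraMap [Nontrivial V] {T : Module.End ℂ V}
    (hT : ∀ l, ∀ x ∈ M.W l, T x ∈ M.W l) (hc : ∀ r p b, Commute T (M.X r p b)) :
    ∃ c : ℂ, T = algebraMap ℂ _ c := by
  obtain ⟨l, hl⟩ := M.exists_W_ne_bot
  have := M.finiteDimensional_W l
  obtain ⟨c, x, hxl, hx0, hx⟩ := exists_mem_eigenvector hl (hT l)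
  refine ⟨c, ?_⟩
  have htop := (M.irr (T.eigenspace c) (fun r p b y hy => by
    rw [Module.End.mem_eigenspace_iff] at hy ⊢
    rw [← Module.End.mul_apply, (hc r p b).eq, Module.End.mul_apply, hy, map_smul])).resolve_left
    fun h => hx0 <| by
      have : x ∈ T.eigenspace c := Module.End.mem_eigenspace_iff.mpr hx
      rw [h] at this; exact this
  ext y
  have : y ∈ T.eigenspace c := htop ▸ Submodule.mem_top
  simpa using Module.End.mem_eigenspace_iff.mp this

section Characters

/-- The degree `r` part of the Lie algebra, localised at the character `η`, kills `x`. -/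
def LocKills (η : B →ₐ[ℂ] ℂ) (r : Fin n → ℤ) (x : V) : Prop :=
  ∃ e, η e ≠ 0 ∧ ∀ p b, M.X r p (e * b) x = 0

variable {M} in
lemma LocKills.add {η : B →ₐ[ℂ] ℂ} {r s : Fin n → ℤ} (hrs : r ≠ s) {x : V}
    (hr : M.LocKills η r x) (hs : M.LocKills η s x) : M.LocKills η (r + s) x := by
  obtain ⟨e, he, hr⟩ := hr
  obtain ⟨e', he', hs⟩ := hs
  refine ⟨e * e', by simp [he, he'], fun p b => ?_⟩
  refine M.forall_of_forall_pair_ne_zero (r := s - r) (sub_ne_zero.mpr hrs.symm)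
    (Q := fun p => M.X (r + s) p (e * e' * b) x = 0) ?_ ?_ p
  · intro p q hp hq
    rw [map_sub, LinearMap.sub_apply, LinearMap.sub_apply, hp, hq, sub_zero]
  · intro p hp
    have h := M.X_X_apply r s p p (e * 1) (e' * b) x
    rw [hr, hs, map_zero, map_zero, zero_add, ← sub_smul, map_smul, ← LinearMap.sub_apply,
      ← map_sub, LinearMap.smul_apply, LinearMap.smul_apply, eq_comm, smul_eq_zero] at h
    rw [← h.resolve_left hp]
    congr 2; ring

/-- The vectors killed by the Lie algebra localised at `η`. -/
def killed (η : B →ₐ[ℂ] ℂ) : Submodule ℂ V where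
  carrier := {x | ∀ r, M.LocKills η r x}
  zero_mem' := fun r => ⟨1, by simp, by simp⟩
  add_mem' := by
    intro x y hx hy r
    obtain ⟨e, he, h⟩ := hx r
    obtain ⟨e', he', h'⟩ := hy r
    refine ⟨e * e', by simp [he, he'], fun p b => ?_⟩
    rw [map_add, mul_assoc, h, mul_left_comm, h', add_zero]
  smul_mem' := by
    intro c x hx r
    obtain ⟨e, he, h⟩ := hx r
    exact ⟨e, he, fun p b => by rw [map_smul, h, smul_zero]⟩

lemma killed_eq_bot_or_top (η : B →ₐ[ℂ] ℂ) : M.killed η = ⊥ ∨ M.killed η = ⊤ := by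
  refine M.irr _ fun s q b' x hx r => ?_
  obtain ⟨e, he, h⟩ := hx r
  obtain ⟨e', he', h'⟩ := hx (r + s)
  refine ⟨e * e', by simp [he, he'], fun p b => ?_⟩
  have e1 : e * e' * b = e * (e' * b) := by ring
  have e2 : e * (e' * b) * b' = e' * (e * b * b') := by ring
  rw [X_X_apply, e1, h, e2, h', map_zero, zero_add]

lemma exists_not_locKills (hn : 1 ≤ n) {η : B →ₐ[ℂ] ℂ} (hη : M.killed η = ⊥) {x : V}
    (hx : x ≠ 0) : ∃ r, r ≠ 0 ∧ ¬ M.LocKills η r x := by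
  by_contra! h
  have hx' : x ∈ M.killed η := fun r => by
    by_cases hr : r = 0
    · let c : Fin n → ℤ := fun _ => 1
      have hc : c ≠ 0 := fun h => by simpa [c] using congrFun h ⟨0, hn⟩
      have hcc : c ≠ -c := fun h => by
        have := congrFun h ⟨0, hn⟩
        simp [c] at this
      have := (h c hc).add hcc (h (-c) (neg_ne_zero.mpr hc))
      rwa [add_neg_cancel, ← hr] at this
    · exact h r hr
  rw [hη] at hx'
  exact hx hx'

/-- From a joint eigenvector of the `X 0 u₀ a`, the part of the Lie algebra at `η` produces
new ones. -/
lemma exists_shift [FiniteDimensional ℂ P] [IsNoetherianRing B] {η : B →ₐ[ℂ] ℂ}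
    {r : Fin n → ℤ} (hr0 : r ≠ 0) {l : Λ} {x : V}
    (hxl : x ∈ M.W l) {χ : B → ℂ} (hχ : ∀ a, M.X 0 M.u₀ a x = χ a • x)
    (hr : ¬ M.LocKills η r x) :
    ∃ y ∈ M.W (l + M.ι r), y ≠ 0 ∧
      ∀ a, M.X 0 M.u₀ a y = (χ a + M.pair r M.u₀ * η a) • y := by
  have hmul : ∀ a p e, M.X 0 M.u₀ a (M.X r p e x) =
      χ a • M.X r p e x + M.pair r M.u₀ • M.X r p (a * e) x := by
    intro a p e
    rw [X_zero_X_apply, hχ, map_smul]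
  let I : Ideal B :=
    { carrier := {e | ∀ p, M.X r p e x = 0}
      zero_mem' := by intro p; simp
      add_mem' := by
        intro e e' he he' p
        rw [map_add, LinearMap.add_apply, he, he', add_zero]
      smul_mem' := by
        intro a e he p
        have h := hmul a p e
        rw [he p, map_zero, smul_zero, zero_add, eq_comm, smul_eq_zero] at h
        exact h.resolve_left (M.pair_u₀ r hr0) }
  have hI : ∀ e, e ∈ I ↔ ∀ p, M.X r p e x = 0 := fun e => Iff.rfl
  have := M.finiteDimensional_W (l + M.ι r)
  let Φ : B →ₗ[ℂ] P →ₗ[ℂ] M.W (l + M.ι r) :=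
    LinearMap.mk₂ ℂ (fun b p => ⟨M.X r p b x, M.X_mem r p b l x hxl⟩)
      (by intros; ext; simp) (by intros; ext; simp) (by intros; ext; simp) (by intros; ext; simp)
  have hfin := (finrank_quotient_le_of_mem_iff (I := I) Φ (fun e => by
    rw [hI, LinearMap.ext_iff]
    exact ⟨fun h p => Subtype.ext (h p), fun h p => congrArg Subtype.val (h p)⟩)).1
  have hle : I ≤ RingHom.ker η := by
    intro e he
    by_contra hne
    refine hr ⟨e, hne, fun p b => ?_⟩
    exact (hI _).mp (I.mul_mem_right b he) p
  obtain ⟨b, hb, hab⟩ := exists_eigenvector_quotient hle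
  rw [hI] at hb
  push Not at hb
  obtain ⟨p, hp⟩ := hb
  refine ⟨M.X r p b x, M.X_mem r p b l x hxl, hp, fun a => ?_⟩
  have h := (hI _).mp (hab a) p
  rw [map_sub, LinearMap.sub_apply, sub_eq_zero, map_smul, LinearMap.smul_apply] at h
  rw [hmul, h, smul_smul, add_smul]

/-- Joint eigenvectors in infinitely many degrees: a counting argument shows that at most one
character can be active. -/
lemma eq_of_killed_eq_bot [FiniteDimensional ℂ P] [IsNoetherianRing B] [Nontrivial V]
    (hn : 1 ≤ n) {η₁ η₂ : B →ₐ[ℂ] ℂ} (h₁ : M.killed η₁ = ⊥) (h₂ : M.killed η₂ = ⊥) :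
    η₁ = η₂ := by
  classical
  by_contra hne
  obtain ⟨a, ha₁, ha₂⟩ : ∃ a, η₁ a = 1 ∧ η₂ a = 0 := by
    obtain ⟨b, hb⟩ := DFunLike.ne_iff.mp hne
    refine ⟨(η₁ b - η₂ b)⁻¹ • (b - algebraMap ℂ B (η₂ b)), ?_, ?_⟩
    · simp [sub_ne_zero.mpr hb]
    · simp
  obtain ⟨l, hl⟩ := M.exists_W_ne_bot
  have := M.finiteDimensional_W l
  obtain ⟨x, hxl, hx0, χ, hχ⟩ := exists_mem_common_eigenvector
    (f := fun a => M.X 0 M.u₀ a) (fun a b => M.commute_X_zero _ _ _ _) (M.W l) hl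
    (fun a x hx => M.X_zero_mem _ _ hx)
  obtain ⟨r₁, hr₁, hr₁x⟩ := M.exists_not_locKills hn h₁ hx0
  -- infinitely many degrees are available from `x`
  have hinf : {r | r ≠ 0 ∧ ¬ M.LocKills η₁ r x}.Infinite := by
    intro hfin
    have hfin' : ({r | r ≠ 0 ∧ ¬ M.LocKills η₁ r x} ∪
        (Set.image (fun r => r₁ - r) {r | r ≠ 0 ∧ ¬ M.LocKills η₁ r x} ∪
        ({0, r₁, fun i => r₁ i / 2} : Set (Fin n → ℤ)))).Finite :=
      hfin.union ((hfin.image _).union (Set.toFinite _))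
    have : Nonempty (Fin n) := ⟨⟨0, hn⟩⟩
    obtain ⟨c, hc⟩ := hfin'.exists_notMem
    simp only [Set.mem_union, Set.mem_ofPred_eq, Set.mem_image, Set.mem_insert_iff,
      Set.mem_singleton_iff, not_or] at hc
    obtain ⟨hc1, hc2, hc0, hcr, hch⟩ := hc
    have k1 : M.LocKills η₁ c x := by
      by_contra h; exact hc1 ⟨hc0, h⟩
    have k2 : M.LocKills η₁ (r₁ - c) x := by
      by_contra h
      exact hc2 ⟨r₁ - c, ⟨sub_ne_zero.mpr (Ne.symm hcr), h⟩, by simp⟩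
    refine hr₁x ?_
    have := k1.add (fun h => hch ?_) k2
    · simpa using this
    · funext i
      have := congrFun h i
      simp only [Pi.sub_apply] at this
      omega
  obtain ⟨K, hKsub, hKcard⟩ := hinf.exists_subset_card_eq (4 * M.N * 2 ^ n + 1)
  have hy : ∀ k : Fin n → ℤ, k ∈ K → ∃ y ∈ M.W (l + M.ι k), y ≠ 0 ∧
      ∀ b, M.X 0 M.u₀ b y = (χ b + M.pair k M.u₀ * η₁ b) • y :=
    fun k hk => M.exists_shift (hKsub hk).1 hxl hχ (hKsub hk).2
  choose! y hyl hy0 hyχ using hy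
  have hr₂ : ∀ k, k ∈ K → ∃ r, r ≠ 0 ∧ ¬ M.LocKills η₂ r (y k) :=
    fun k hk => M.exists_not_locKills hn h₂ (hy0 k hk)
  choose! r₂ _ hr₂ using hr₂
  obtain ⟨m, K', hK', hcard, hm⟩ := exists_card_filter_lt (N := M.N) hn K (by omega)
    (fun k m => m - k ≠ 0 ∧ ¬ M.LocKills η₂ (m - k) (y k)) (fun k => r₂ k + k + k)
    (fun k => {k, r₂ k + k, fun i => (r₂ k + k + k) i / 2})
    (fun k => Finset.card_le_three) (by
      intro k hk m hmx
      simp only [Finset.mem_insert, Finset.mem_singleton, not_or] at hmx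
      obtain ⟨m1, m2, m3⟩ := hmx
      by_contra! hcon
      have k1 := hcon.1 (sub_ne_zero.mpr m1)
      have k2 := hcon.2 (fun h => m2 (by rw [← sub_eq_zero, ← neg_eq_zero, ← h]; abel))
      refine hr₂ k hk ?_
      have := k1.add (fun h => m3 ?_) k2
      · convert this using 1; abel
      · funext i
        have := congrFun h i
        simp only [Pi.sub_apply, Pi.add_apply] at this ⊢
        omega)
  have := M.finiteDimensional_W (l + M.ι m)
  have hle := card_le_finrank_of_eigenvectors (f := M.X 0 M.u₀ a) (U := M.W (l + M.ι m)) K'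
    (μ := fun k => χ a + M.pair k M.u₀) (by
      intro k _ k' _ h
      simp only [add_right_inj] at h
      by_contra hne
      refine M.pair_u₀ (k - k') (sub_ne_zero.mpr hne) ?_
      rw [map_sub, LinearMap.sub_apply, h, sub_self]) (by
      intro k hk
      obtain ⟨z, hz, hz0, hzχ⟩ := M.exists_shift (hm k hk).1 (hyl k (hK' hk)) (hyχ k (hK' hk))
        (hm k hk).2
      refine ⟨z, ?_, hz0, ?_⟩
      · rwa [add_assoc, ← map_add, add_sub_cancel] at hz
      · rw [hzχ, ha₁, ha₂, mul_one, mul_zero, add_zero])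
  exact absurd (hle.trans (M.finrank_W_le _)) (by omega)

end Characters

section Evaluation

lemma pair_swap (r : Fin n → ℤ) (p : P) :
    M.pair (-r) p • p - M.pair r p • p = (-(2 * M.pair r p)) • p := by
  rw [map_neg, LinearMap.neg_apply, ← sub_smul]; congr 1; ring

/-- The degree zero part of the Lie algebra is generated by the other degrees. -/
lemma X_eq_zero_of_forall_ne (hn : 1 ≤ n) {b : B} (h : ∀ r, r ≠ 0 → ∀ p, M.X r p b = 0)
    (r : Fin n → ℤ) (p : P) : M.X r p b = 0 := by
  by_cases hr : r = 0
  · subst hr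
    let c : Fin n → ℤ := fun _ => 1
    have hc : c ≠ 0 := fun h => by simpa [c] using congrFun h ⟨0, hn⟩
    refine M.forall_of_forall_pair_ne_zero hc (Q := fun p => M.X 0 p b = 0) ?_ ?_ p
    · intro p q hp hq
      rw [map_sub, LinearMap.sub_apply, hp, hq, sub_zero]
    · intro p hp
      have := M.mul_X c (-c) p p b 1
      rw [h c hc, zero_mul, mul_zero, zero_add, add_neg_cancel, pair_swap, map_smul,
        LinearMap.smul_apply, mul_one, eq_comm, smul_eq_zero] at this
      exact this.resolve_left (by simpa using hp)
  · exact h r hr p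

/-- The elements `b` such that `X r p b` kills the weight space `W l`. -/
def annWeight {r : Fin n → ℤ} (hr : r ≠ 0) (p : P) (l : Λ) : Ideal B where
  carrier := {b | ∀ x ∈ M.W l, M.X r p b x = 0}
  zero_mem' := by intro x _; simp
  add_mem' := by
    intro b b' hb hb' x hx
    rw [map_add, LinearMap.add_apply, hb x hx, hb' x hx, add_zero]
  smul_mem' := by
    intro a b hb x hx
    have h := M.X_zero_X_apply r M.u₀ p a b x
    rw [hb x hx, hb _ (M.X_zero_mem _ _ hx), map_zero, zero_add, eq_comm, smul_eq_zero] at h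
    exact h.resolve_left (M.pair_u₀ r hr)

lemma mem_annWeight {r : Fin n → ℤ} {hr : r ≠ 0} {p : P} {l : Λ} {b : B} :
    b ∈ M.annWeight hr p l ↔ ∀ x ∈ M.W l, M.X r p b x = 0 := Iff.rfl

lemma finrank_quotient_annWeight {r : Fin n → ℤ} (hr : r ≠ 0) (p : P) (l : Λ) :
    FiniteDimensional ℂ (B ⧸ M.annWeight hr p l) ∧
      Module.finrank ℂ (B ⧸ M.annWeight hr p l) ≤ M.N * M.N := by
  have := M.finiteDimensional_W l
  have := M.finiteDimensional_W (l + M.ι r)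
  let Φ : B →ₗ[ℂ] M.W l →ₗ[ℂ] M.W (l + M.ι r) :=
    LinearMap.mk₂ ℂ (fun b x => ⟨M.X r p b x, M.X_mem r p b l x x.2⟩)
      (by intros; ext; simp) (by intros; ext; simp) (by intros; ext; simp) (by intros; ext; simp)
  have h := finrank_quotient_le_of_mem_iff (I := M.annWeight hr p l) Φ (fun b => by
    rw [mem_annWeight, LinearMap.ext_iff]
    exact ⟨fun h x => Subtype.ext (h x x.2), fun h x hx => congrArg Subtype.val (h ⟨x, hx⟩)⟩)
  refine ⟨h.1, h.2.trans ?_⟩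
  rw [Module.finrank_linearMap]
  exact Nat.mul_le_mul (M.finrank_W_le _) (M.finrank_W_le _)

/-- The prime ideals above `annWeight` belong to active characters. -/
lemma exists_killed_eq_bot_of_annWeight_le [IsNoetherianRing B] {r : Fin n → ℤ} {hr : r ≠ 0}
    {p : P} {l : Λ} {J : Ideal B} (hJ : J.IsPrime) (hle : M.annWeight hr p l ≤ J) :
    ∃ η : B →ₐ[ℂ] ℂ, RingHom.ker η = J ∧ M.killed η = ⊥ := by
  have := (M.finrank_quotient_annWeight hr p l).1
  have := finiteDimensional_quotient_of_le hle
  obtain ⟨η, rfl⟩ := exists_ker_eq_of_isPrime (J := J)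
  refine ⟨η, rfl, (M.killed_eq_bot_or_top η).resolve_right fun htop => ?_⟩
  obtain ⟨b, hb, hab⟩ := exists_eigenvector_quotient hle
  rw [mem_annWeight] at hb
  push Not at hb
  obtain ⟨x, hx, hbx⟩ := hb
  obtain ⟨e, he, hex⟩ := (htop ▸ Submodule.mem_top : x ∈ M.killed η) r
  have h := M.mem_annWeight.mp (hab e) x hx
  rw [map_sub, LinearMap.sub_apply, hex, zero_sub, neg_eq_zero, map_smul, LinearMap.smul_apply,
    smul_eq_zero] at h
  exact h.elim he hbx

/-- A nontrivial module has an active character. -/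
lemma exists_killed_eq_bot [IsNoetherianRing B] (hn : 1 ≤ n)
    (hnt : ∃ r p b, M.X r p b ≠ 0) : ∃ η : B →ₐ[ℂ] ℂ, M.killed η = ⊥ := by
  by_contra! h
  obtain ⟨r, p, b, hX⟩ := hnt
  refine hX (M.X_eq_zero_of_forall_ne hn (fun r hr p => M.end_eq_zero fun l x hx => ?_) r p)
  have htop : M.annWeight hr p l = ⊤ := by
    by_contra hne
    obtain ⟨J, hJ, hle⟩ := Ideal.exists_le_maximal _ hne
    obtain ⟨η, -, hη⟩ := M.exists_killed_eq_bot_of_annWeight_le hJ.isPrime hle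
    exact h η hη
  exact M.mem_annWeight.mp (htop ▸ Submodule.mem_top : b ∈ M.annWeight hr p l) x hx

/-- The elements of `B` whose multiples act trivially. -/
def ann : Ideal B where
  carrier := {a | ∀ r p b, M.X r p (a * b) = 0}
  zero_mem' := by intro r p b; simp
  add_mem' := by
    intro a a' h h' r p b
    rw [add_mul, map_add, h, h', add_zero]
  smul_mem' := by
    intro c a h r p b
    rw [smul_eq_mul, mul_comm c a, mul_assoc, h]

lemma exists_ker_pow_le_ann [FiniteDimensional ℂ P] [IsNoetherianRing B] [Nontrivial V]
    (hn : 1 ≤ n) {η : B →ₐ[ℂ] ℂ} (hη : M.killed η = ⊥) :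
    ∃ k, RingHom.ker η ^ k ≤ M.ann := by
  refine Ideal.exists_pow_le_of_le_radical_of_fg (fun a ha => ⟨M.N * M.N, fun r p b => ?_⟩)
    (IsNoetherian.noetherian _)
  refine M.X_eq_zero_of_forall_ne hn (fun r hr p => M.end_eq_zero fun l x hx => ?_) r p
  obtain ⟨hfin, hrank⟩ := M.finrank_quotient_annWeight hr p l
  refine M.mem_annWeight.mp (Ideal.mul_mem_right b _ (pow_mem_of_forall_prime hrank ?_)) x hx
  intro J hJ hle
  obtain ⟨η', rfl, hη'⟩ := M.exists_killed_eq_bot_of_annWeight_le hJ hle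
  rwa [← M.eq_of_killed_eq_bot hn hη hη']

/-- An ideal of square zero of the form `𝔤 ⊗ a`, on which `B` acts by scalars, acts trivially. -/
lemma X_eq_zero_of_sq_eq_zero [FiniteDimensional ℂ P] [Nontrivial V] (hn : 1 ≤ n)
    {η : B →ₐ[ℂ] ℂ} {a : B} (hab : ∀ r p b, M.X r p (a * b) = η b • M.X r p a)
    (haa : ∀ r p, M.X r p (a * a) = 0) (r : Fin n → ℤ) (p : P) : M.X r p a = 0 := by
  have hcomm : ∀ r s p q, Commute (M.X r p a) (M.X s q a) := by
    intro r s p q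
    rw [commute_iff_eq, M.mul_X, haa, add_zero]
  have hbr : ∀ r s p q, M.X r p 1 * M.X s q a =
      M.X s q a * M.X r p 1 + M.X (r + s) (M.pair s p • q - M.pair r q • p) a := by
    intro r s p q
    rw [M.mul_X, one_mul]
  have hnil : ∀ r s p q, IsNilpotent (M.X s q a) →
      IsNilpotent (M.X (r + s) (M.pair s p • q - M.pair r q • p) a) := fun r s p q h =>
    isNilpotent_commutator (hbr r s p q) (hbr r _ p _) (hcomm _ _ _ _) (hcomm _ _ _ _) h
  obtain ⟨c, hc⟩ := M.exists_pow_sub_eq_zero (T := M.X 0 M.u₀ a)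
    (fun l x hx => M.X_zero_mem _ _ hx) (fun r p b => by
      rw [M.mul_X, add_sub_cancel_left, hab]
      exact (hcomm _ _ _ _).smul_right _)
  have hdeg : ∀ r, r ≠ 0 → ∀ q (Q : Module.End ℂ V → Prop), (∀ (c : ℂ) y, Q y → Q (c • y)) →
      Q (M.X (r + 0) (M.pair 0 q • M.u₀ - M.pair r M.u₀ • q) a) → Q (M.X r q a) := by
    intro r hr q Q hQ h
    have := hQ (-(M.pair r M.u₀)⁻¹) _ h
    rwa [add_zero, map_zero, LinearMap.zero_apply, zero_smul, zero_sub, map_neg, map_smul,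
      LinearMap.neg_apply, LinearMap.smul_apply, smul_neg, neg_smul, neg_neg, smul_smul,
      inv_mul_cancel₀ (M.pair_u₀ r hr), one_smul] at this
  have hnil_ne : ∀ r, r ≠ 0 → ∀ q, IsNilpotent (M.X r q a) := by
    intro r hr q
    refine hdeg r hr q IsNilpotent (fun c y hy => hy.smul c) ?_
    refine isNilpotent_commutator (d := M.X r q 1) (x := M.X 0 M.u₀ a - algebraMap ℂ _ c) ?_
      (hbr r _ q _) ?_ (hcomm _ _ _ _) ⟨_, hc⟩
    · rw [mul_sub, sub_mul, hbr, Algebra.commutes c (M.X r q 1)]; abel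
    · exact (hcomm _ _ _ _).sub_left (Algebra.commute_algebraMap_left c _)
  have hnil_zero : ∀ p, IsNilpotent (M.X 0 p a) := by
    let c : Fin n → ℤ := fun _ => 1
    have hc : c ≠ 0 := fun h => by simpa [c] using congrFun h ⟨0, hn⟩
    refine M.forall_of_forall_pair_ne_zero hc ?_ ?_
    · intro p q hp hq
      rw [map_sub, LinearMap.sub_apply]
      exact (hcomm _ _ _ _).isNilpotent_sub hp hq
    · intro p hp
      have := hnil c (-c) p p (hnil_ne (-c) (neg_ne_zero.mpr hc) p)
      rw [add_neg_cancel, pair_swap, map_smul, LinearMap.smul_apply] at this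
      have h2 := this.smul (-(2 * M.pair c p))⁻¹
      rwa [smul_smul, inv_mul_cancel₀ (by simpa using hp), one_smul] at h2
  obtain ⟨k, hk, hk'⟩ := exists_pow_ne_zero_of_isNilpotent (hnil_zero M.u₀)
  let U : Submodule ℂ V :=
    { carrier := {x | ∀ r, r ≠ 0 → ∀ q, M.X r q a x = 0}
      zero_mem' := by intro r _ q; simp
      add_mem' := by
        intro x y hx hy r hr q
        rw [map_add, hx r hr, hy r hr, add_zero]
      smul_mem' := by
        intro c x hx r hr q
        rw [map_smul, hx r hr, smul_zero] }
  have hU : U ≠ ⊥ := by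
    intro h
    refine hk (LinearMap.ext fun x => ?_)
    have : (M.X 0 M.u₀ a ^ k) x ∈ U := by
      intro r hr q
      rw [← Module.End.mul_apply, hdeg r hr q (fun y => y * M.X 0 M.u₀ a ^ k = 0)
        (fun c y hy => by rw [smul_mul_assoc, hy, smul_zero])
        (commutator_mul_pow_eq_zero (hbr r 0 q M.u₀) (hcomm _ _ _ _) hk'), LinearMap.zero_apply]
    rw [h] at this
    exact this
  let β := Module.finBasis ℂ P
  obtain ⟨x, hxU, hx0, hx⟩ := exists_mem_common_kernel (f := fun i => M.X 0 (β i) a)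
    (fun i j => hcomm _ _ _ _) (fun i => hnil_zero _) hU (fun i x hx r hr q => by
      rw [← Module.End.mul_apply, (hcomm _ _ _ _).eq, Module.End.mul_apply, hx r hr, map_zero])
    Finset.univ
  let Z : Submodule ℂ V :=
    { carrier := {x | ∀ r q, M.X r q a x = 0}
      zero_mem' := by intro r q; simp
      add_mem' := by
        intro x y hx hy r q
        rw [map_add, hx, hy, add_zero]
      smul_mem' := by
        intro c x hx r q
        rw [map_smul, hx, smul_zero] }
  have hxZ : x ∈ Z := by
    intro r q
    by_cases hr : r = 0
    · subst hr
      have : (LinearMap.applyₗ x ∘ₗ (LinearMap.applyₗ a ∘ₗ M.X 0)) = 0 :=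
        β.ext fun i => by simpa using hx i (Finset.mem_univ i)
      exact LinearMap.congr_fun this q
    · exact hxU r hr q
  have hZ : Z = ⊤ := (M.irr Z (fun s q b y hy r p => by
    rw [X_X_apply, hy, map_zero, zero_add, hab, LinearMap.smul_apply, hy, smul_zero])).resolve_left
    fun h => hx0 (by rw [h] at hxZ; exact hxZ)
  ext y
  exact (hZ ▸ Submodule.mem_top : y ∈ Z) r p

/-- A nontrivial irreducible uniformly bounded module is a single point evaluation module. -/
theorem exists_eval [FiniteDimensional ℂ P] [IsNoetherianRing B] [Nontrivial V]
    (hn : 1 ≤ n) (hnt : ∃ r p b, M.X r p b ≠ 0) :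
    ∃ η : B →ₐ[ℂ] ℂ, ∀ r p b, M.X r p b = η b • M.X r p 1 := by
  classical
  obtain ⟨η, hη⟩ := M.exists_killed_eq_bot hn hnt
  refine ⟨η, ?_⟩
  have hle : RingHom.ker η ≤ M.ann := by
    by_contra hnle
    have hex := M.exists_ker_pow_le_ann hn hη
    set k := Nat.find hex with hk
    have hkle : RingHom.ker η ^ k ≤ M.ann := Nat.find_spec hex
    have hk0 : k ≠ 0 := fun h => hnle fun a _ => hkle (by rw [h, pow_zero]; simp)
    have hk1 : k ≠ 1 := fun h => hnle (by rwa [h, pow_one] at hkle)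
    obtain ⟨j, hj⟩ : ∃ j, k = j + 2 := ⟨k - 2, by omega⟩
    have hnj : ¬ RingHom.ker η ^ (j + 1) ≤ M.ann := Nat.find_min hex (by omega)
    obtain ⟨a, haj, haann⟩ := Set.not_subset.mp hnj
    have haη : a ∈ RingHom.ker η := Ideal.pow_le_self (Nat.succ_ne_zero j) haj
    have hker : ∀ b ∈ RingHom.ker η, ∀ r p, M.X r p (a * b) = 0 := by
      intro b hb r p
      have : a * b ∈ M.ann := hkle (by rw [hj, pow_succ]; exact Ideal.mul_mem_mul haj hb)
      simpa using this r p 1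
    have hab : ∀ r p b, M.X r p (a * b) = η b • M.X r p a := by
      intro r p b
      have := hker (b - algebraMap ℂ B (η b)) (by simp [RingHom.mem_ker]) r p
      rwa [mul_sub, map_sub, sub_eq_zero, mul_comm a (algebraMap ℂ B _), ← Algebra.smul_def,
        map_smul] at this
    refine haann fun r p b => ?_
    rw [hab, M.X_eq_zero_of_sq_eq_zero hn hab (hker a haη), smul_zero]
  intro r p b
  have := hle (show b - algebraMap ℂ B (η b) ∈ RingHom.ker η by simp [RingHom.mem_ker]) r p 1
  rwa [mul_one, map_sub, sub_eq_zero, Algebra.algebraMap_eq_smul_one, map_smul] at this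

end Evaluation

section Central

/-- An element `s` of `P` orthogonal to `ℤⁿ`, for which the central operator `X 0 s 1`
vanishes, acts trivially. -/
theorem X_eq_zero_of_X_zero_eq_zero [Nontrivial V] (hn : 1 ≤ n) {η : B →ₐ[ℂ] ℂ}
    (hη : ∀ r p b, M.X r p b = η b • M.X r p 1) {s : P} (hs : ∀ r, M.pair r s = 0)
    (hs0 : M.X 0 s 1 = 0) (m : Fin n → ℤ) : M.X m s 1 = 0 := by
  let E : (Fin n → ℤ) → Module.End ℂ V := fun m => M.X m s 1
  have hEE : ∀ m k, Commute (E m) (E k) := by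
    intro m k
    simp only [E]
    rw [commute_iff_eq, M.mul_X, hs, hs]
    simp
  have hXE : ∀ r p b m, M.X r p b * E m - E m * M.X r p b =
      (η b * M.pair m p) • E (r + m) := by
    intro r p b m
    simp only [E]
    rw [M.mul_X, add_sub_cancel_left, hs, zero_smul, sub_zero, mul_one, map_smul,
      LinearMap.smul_apply, hη _ _ b, smul_smul, mul_comm]
  have hXEE : ∀ r m k, M.X r M.u₀ 1 * (E m * E k) - E m * E k * M.X r M.u₀ 1 =
      M.pair m M.u₀ • (E (r + m) * E k) + M.pair k M.u₀ • (E m * E (r + k)) := by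
    intro r m k
    have h1 := hXE r M.u₀ 1 m
    have h2 := hXE r M.u₀ 1 k
    rw [map_one η, one_mul] at h1 h2
    rw [← smul_mul_assoc, ← mul_smul_comm, ← h1, ← h2]
    noncomm_ring
  let C : Subalgebra ℂ (Module.End ℂ V) := Algebra.adjoin ℂ (Set.range E)
  have hE : ∀ m, E m ∈ C := fun m => Algebra.subset_adjoin ⟨m, rfl⟩
  have hcomm : ∀ x ∈ C, ∀ y ∈ C, Commute x y := by
    intro x hx y hy
    refine Algebra.commute_of_mem_adjoin_of_forall_mem_commute hy ?_
    rintro _ ⟨k, rfl⟩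
    refine (Algebra.commute_of_mem_adjoin_of_forall_mem_commute hx ?_).symm
    rintro _ ⟨m, rfl⟩
    exact hEE k m
  have hder : ∀ r p b, ∀ x ∈ C, M.X r p b * x - x * M.X r p b ∈ C := by
    intro r p b x hx
    induction hx using Algebra.adjoin_induction with
    | mem x hx =>
      obtain ⟨m, rfl⟩ := hx
      rw [hXE]
      exact C.smul_mem (hE _) _
    | algebraMap c =>
      rw [Algebra.commutes c (M.X r p b), sub_self]
      exact C.zero_mem
    | add x y _ _ hx hy =>
      convert C.add_mem hx hy using 1
      noncomm_ring
    | mul x y hxC hyC hx hy =>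
      convert C.add_mem (C.mul_mem hx hyC) (C.mul_mem hxC hy) using 1
      noncomm_ring
  have hnil : ∀ r p b, ∀ x ∈ C, IsNilpotent x → IsNilpotent (M.X r p b * x - x * M.X r p b) := by
    intro r p b x hx h
    have h1 := hder r p b x hx
    exact isNilpotent_commutator (d := M.X r p b) (by abel)
      (z := M.X r p b * (M.X r p b * x - x * M.X r p b) -
        (M.X r p b * x - x * M.X r p b) * M.X r p b) (by abel)
      (hcomm _ hx _ h1) (hcomm _ h1 _ (hder r p b _ h1)) h
  have hE0 : E 0 = 0 := hs0
  obtain ⟨j, hj, hjnil⟩ : ∃ j, j ≠ 0 ∧ IsNilpotent (E j) := by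
    let m : Fin n → ℤ := fun _ => 1
    have hm : m ≠ 0 := fun h => by simpa [m] using congrFun h ⟨0, hn⟩
    have hα := M.pair_u₀ m hm
    have hT : E m * E (-m) ∈ C := C.mul_mem (hE _) (hE _)
    obtain ⟨c, hc⟩ := M.exists_pow_sub_eq_zero (T := E m * E (-m))
      (fun l x hx => by
        have := M.X_mem m s 1 _ _ (M.X_mem (-m) s 1 l x hx)
        rwa [map_neg, neg_add_cancel_right] at this)
      (fun r p b => by
        rw [← neg_sub (M.X r p b * _)]
        exact (hcomm _ hT _ (hder r p b _ hT)).neg_right)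
    have hTc : E m * E (-m) - algebraMap ℂ _ c ∈ C := C.sub_mem hT (C.algebraMap_mem c)
    have hdc : ∀ r, IsNilpotent (E (r + m) * E (-m) - E m * E (r + -m)) := by
      intro r
      have h := (hnil r M.u₀ 1 _ hTc ⟨_, hc⟩).smul (M.pair m M.u₀)⁻¹
      rwa [mul_sub, sub_mul, Algebra.commutes c (M.X r M.u₀ 1), sub_sub_sub_cancel_right, hXEE,
        map_neg, LinearMap.neg_apply, neg_smul, ← sub_eq_add_neg, ← smul_sub, smul_smul,
        inv_mul_cancel₀ hα, one_smul] at h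
    by_cases hc0 : c = 0
    · refine ⟨m, hm, ?_⟩
      subst hc0
      rw [map_zero, sub_zero] at hc
      have hZ := hdc (m + m)
      rw [add_neg_cancel_right] at hZ
      have hZC : E (m + m + m) * E (-m) - E m * E m ∈ C :=
        C.sub_mem (C.mul_mem (hE _) (hE _)) (C.mul_mem (hE _) (hE _))
      have hcube : E m ^ 3 = E (m + m + m) * (E m * E (-m)) -
          E m * (E (m + m + m) * E (-m) - E m * E m) := by
        rw [mul_sub, ← mul_assoc, ← mul_assoc (E m), (hEE (m + m + m) m).eq]
        noncomm_ring
      refine (IsNilpotent.pow_iff_pos (n := 3) (by norm_num)).mp ?_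
      rw [hcube]
      refine Commute.isNilpotent_sub (hcomm _ (C.mul_mem (hE _) hT) _ (C.mul_mem (hE _) hZC)) ?_ ?_
      · exact (hcomm _ (hE _) _ hT).isNilpotent_mul_left ⟨_, hc⟩
      · exact (hcomm _ (hE _) _ hZC).isNilpotent_mul_left hZ
    · refine ⟨-m + -m, fun h => hm ?_, ?_⟩
      · funext i
        have := congrFun h i
        simp only [Pi.add_apply, Pi.neg_apply, Pi.zero_apply] at this ⊢
        omega
      have h1 := hdc (-m)
      rw [neg_add_cancel, hE0, zero_mul, zero_sub, isNilpotent_neg_iff] at h1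
      have h1C : E m * E (-m + -m) ∈ C := C.mul_mem (hE _) (hE _)
      have h2 : IsNilpotent (c • E (-m + -m)) := by
        have e : c • E (-m + -m) = E (-m) * (E m * E (-m + -m)) -
            E (-m + -m) * (E m * E (-m) - algebraMap ℂ _ c) := by
          rw [mul_sub, (hcomm _ (hE (-m + -m)) _ hT).eq, ← mul_assoc (E (-m)), (hEE (-m) m).eq,
            sub_sub_cancel, Algebra.smul_def, Algebra.commutes c (E (-m + -m))]
        rw [e]
        refine Commute.isNilpotent_sub
          (hcomm _ (C.mul_mem (hE _) h1C) _ (C.mul_mem (hE _) hTc)) ?_ ?_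
        · exact (hcomm _ (hE _) _ h1C).isNilpotent_mul_left h1
        · exact (hcomm _ (hE _) _ hTc).isNilpotent_mul_left ⟨_, hc⟩
      have h3 := h2.smul c⁻¹
      rwa [smul_smul, inv_mul_cancel₀ hc0, one_smul] at h3
  obtain ⟨k, hk, hk'⟩ := exists_pow_ne_zero_of_isNilpotent hjnil
  have hkill : ∀ i, E i * E j ^ k = 0 := by
    intro i
    have hbr := hXE (i - j) M.u₀ 1 j
    rw [map_one η, one_mul, sub_add_cancel, sub_eq_iff_eq_add'] at hbr
    have h := commutator_mul_pow_eq_zero hbr ((hEE j i).smul_right _) hk'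
    rw [smul_mul_assoc, smul_eq_zero] at h
    exact h.resolve_left (M.pair_u₀ j hj)
  let Z : Submodule ℂ V :=
    { carrier := {x | ∀ i, E i x = 0}
      zero_mem' := by intro i; simp
      add_mem' := by
        intro x y hx hy i
        rw [map_add, hx, hy, add_zero]
      smul_mem' := by
        intro c x hx i
        rw [map_smul, hx, smul_zero] }
  have hZ : Z = ⊤ := (M.irr Z (fun r p b x hx i => by
      have := congrArg (fun f : Module.End ℂ V => f x) (hXE r p b i)
      simpa [hx i, hx (r + i)] using this)).resolve_left fun h => hk <| LinearMap.ext fun x => by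
    have : (E j ^ k) x ∈ Z := fun i => by
      rw [← Module.End.mul_apply, hkill, LinearMap.zero_apply]
    rw [h] at this
    exact this
  ext y
  exact (hZ ▸ Submodule.mem_top : y ∈ Z) m

end Central

end BoundedRep

lemma exists_pairC_ne_zero (n : ℕ) : ∃ u : Fin n → ℂ, ∀ m : Fin n → ℤ, m ≠ 0 → pairC u m ≠ 0 := by
  let β := Module.Basis.ofVectorSpace ℚ ℂ
  have : Infinite (Module.Basis.ofVectorSpaceIndex ℚ ℂ) := by
    rw [Cardinal.infinite_iff, β.mk_eq_rank'', Complex.rank_rat_complex]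
    exact Cardinal.aleph0_le_continuum
  let e : Fin n ↪ Module.Basis.ofVectorSpaceIndex ℚ ℂ :=
    Fin.valEmbedding.trans (Infinite.natEmbedding _)
  have hli := β.linearIndependent.comp e e.injective
  refine ⟨β ∘ e, fun m hm h => hm (funext fun i => ?_)⟩
  have := Fintype.linearIndependent_iff.mp hli (fun i => (m i : ℚ)) (by
    rw [← h, pairC]
    refine Finset.sum_congr rfl fun i _ => ?_
    rw [mul_comm, Rat.smul_def, Rat.cast_intCast]) i
  exact_mod_cast this

namespace LoopWitt.ExtWittRep

variable {n : ℕ} {S B V : Type*} [AddCommGroup S] [Module ℂ S] [CommRing B] [Algebra ℂ B]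
  [AddCommGroup V] [Module ℂ V]

/-- The pairing of `ℤⁿ` with `ℂⁿ × S`, trivial on `S`. -/
def pairHom (n : ℕ) (S : Type*) [AddCommGroup S] [Module ℂ S] :
    (Fin n → ℤ) →+ Module.Dual ℂ ((Fin n → ℂ) × S) where
  toFun r :=
    { toFun := fun p => pairC p.1 r
      map_add' := fun p q => by simp [pairC, add_mul, Finset.sum_add_distrib]
      map_smul' := fun c p => by simp [pairC, Finset.mul_sum, mul_assoc] }
  map_zero' := by ext <;> simp [pairC]
  map_add' r s := by
    ext p
    · simp [pairC, mul_add, Finset.sum_add_distrib]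
    · simp [pairC]

/-- The operators `D u r b + E s r b`. -/
def opX (ρ : ExtWittRep n S B V) (r : Fin n → ℤ) :
    ((Fin n → ℂ) × S) →ₗ[ℂ] B →ₗ[ℂ] Module.End ℂ V :=
  LinearMap.mk₂ ℂ (fun p b => ρ.D p.1 r b + ρ.E p.2 r b)
    (fun p q b => by simp only [Prod.fst_add, Prod.snd_add, ρ.D_add_u, ρ.E_add_s]; abel)
    (fun c p b => by simp only [Prod.smul_fst, Prod.smul_snd, ρ.D_smul_u, ρ.E_smul_s, smul_add])
    (fun p b b' => by simp only [ρ.D_add_b, ρ.E_add_b]; abel)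
    (fun c p b => by simp only [ρ.D_smul_b, ρ.E_smul_b, smul_add])

lemma opX_apply (ρ : ExtWittRep n S B V) (r : Fin n → ℤ) (p : (Fin n → ℂ) × S) (b : B) :
    ρ.opX r p b = ρ.D p.1 r b + ρ.E p.2 r b := rfl

lemma D_zero (ρ : ExtWittRep n S B V) (r : Fin n → ℤ) (b : B) : ρ.D 0 r b = 0 := by
  simpa using ρ.D_smul_u 0 0 r b

lemma E_zero (ρ : ExtWittRep n S B V) (r : Fin n → ℤ) (b : B) : ρ.E 0 r b = 0 := by
  simpa using ρ.E_smul_s 0 0 r b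

lemma opX_fst (ρ : ExtWittRep n S B V) (r : Fin n → ℤ) (u : Fin n → ℂ) (b : B) :
    ρ.opX r (u, 0) b = ρ.D u r b := by
  rw [opX_apply, E_zero, add_zero]

lemma opX_snd (ρ : ExtWittRep n S B V) (r : Fin n → ℤ) (s : S) (b : B) :
    ρ.opX r (0, s) b = ρ.E s r b := by
  rw [opX_apply, D_zero, zero_add]

lemma opX_mul_opX (ρ : ExtWittRep n S B V) (r s : Fin n → ℤ) (p q : (Fin n → ℂ) × S) (b b' : B) :
    ρ.opX r p b * ρ.opX s q b' = ρ.opX s q b' * ρ.opX r p b +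
      ρ.opX (r + s) (pairHom n S s p • q - pairHom n S r q • p) (b * b') := by
  have h1 := ρ.comm_DD p.1 r b q.1 s b'
  have h2 := ρ.comm_DE p.1 r b q.2 s b'
  have h3 := ρ.comm_DE q.1 s b' p.2 r b
  have h4 := ρ.comm_EE p.2 r b q.2 s b'
  have h5 : ρ.opX (r + s) (pairHom n S s p • q - pairHom n S r q • p) (b * b') =
      ρ.D (pairC p.1 s • q.1 - pairC q.1 r • p.1) (r + s) (b * b') +
        (pairC p.1 s • ρ.E q.2 (s + r) (b * b') - pairC q.1 r • ρ.E p.2 (r + s) (b' * b)) := by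
    rw [opX_apply, add_comm s r, mul_comm b' b, sub_eq_add_neg (pairC p.1 s • ρ.E _ _ _), ← neg_smul,
      ← ρ.E_smul_s, ← ρ.E_smul_s, ← ρ.E_add_s, neg_smul, ← sub_eq_add_neg]
    rfl
  rw [h5, ← h1, ← h2, ← h3, opX_apply, opX_apply]
  rw [Ring.lie_def, sub_eq_zero] at h4
  simp only [Ring.lie_def, add_mul, mul_add, h4]
  abel

lemma pairCC_add_intCast (u lam : Fin n → ℂ) (r : Fin n → ℤ) :
    pairCC u (lam + fun i => (r i : ℂ)) = pairCC u lam + pairC u r := by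
  simp [pairCC, pairC, mul_add, Finset.sum_add_distrib]

lemma opX_mem_weightSpace (ρ : ExtWittRep n S B V) (r : Fin n → ℤ) (p : (Fin n → ℂ) × S) (b : B)
    {lam : Fin n → ℂ} {c : S →ₗ[ℂ] ℂ} {x : V} (hx : x ∈ ρ.weightSpace lam c) :
    ρ.opX r p b x ∈ ρ.weightSpace (lam + fun i => (r i : ℂ)) c := by
  have key : ∀ q, ρ.opX 0 q 1 (ρ.opX r p b x) = ρ.opX r p b (ρ.opX 0 q 1 x) +
      pairC q.1 r • ρ.opX r p b x := by
    intro q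
    have := congrArg (fun f : Module.End ℂ V => f x) (ρ.opX_mul_opX 0 r q p 1 b)
    change _ = _ + pairHom n S r q • _
    simpa using this
  refine ⟨fun u => ?_, fun s => ?_⟩
  · have := key (u, 0)
    rw [opX_fst, hx.1 u, map_smul, ← add_smul] at this
    rw [this, pairCC_add_intCast]
  · have := key (0, s)
    rw [opX_snd, hx.2 s, map_smul] at this
    simpa [pairC] using this

/-- A bounded irreducible weight module as a `BoundedRep`. -/
def toBoundedRep (ρ : ExtWittRep n S B V) (hw : ρ.IsWeightModule) (hirr : ρ.IsIrreducible) {N : ℕ}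
    (hN : ∀ lam c, Module.rank ℂ ↥(ρ.weightSpace lam c) ≤ (N : Cardinal)) {u : Fin n → ℂ}
    (hu : ∀ m, m ≠ 0 → pairC u m ≠ 0) :
    BoundedRep n ((Fin n → ℂ) × S) B V ((Fin n → ℂ) × (S →ₗ[ℂ] ℂ)) where
  pair := pairHom n S
  X := ρ.opX
  mul_X := ρ.opX_mul_opX
  irr U hU := hirr.2 U
    ⟨fun u r b x hx => ρ.opX_fst r u b ▸ hU r (u, 0) b x hx,
      fun s m b x hx => ρ.opX_snd m s b ▸ hU m (0, s) b x hx⟩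
  ι :=
    { toFun := fun r => (fun i => (r i : ℂ), 0)
      map_zero' := by ext <;> simp
      map_add' := fun r s => by ext <;> simp }
  W l := ρ.weightSpace l.1 l.2
  N := N
  rank_le l := hN l.1 l.2
  iSup_W := hw
  X_mem r p b l x hx := by simpa using ρ.opX_mem_weightSpace r p b hx
  u₀ := (u, 0)
  pair_u₀ := hu

end LoopWitt.ExtWittRep

/-- For `n ≥ 1`, any non-trivial irreducible uniformly bounded weight
`𝔏_{S,n}(B)`-module reduces to an irreducible module for `𝔏(B)` or `Wₙ ⊗ B` (a subspace
of `S` of codimension at most one acts trivially), and as such it is a single point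
evaluation module. -/
theorem stmt6 {n : ℕ} (hn : 1 ≤ n) {S B V : Type*}
    [AddCommGroup S] [Module ℂ S] [FiniteDimensional ℂ S]
    [CommRing B] [Algebra ℂ B] [Algebra.FiniteType ℂ B]
    [AddCommGroup V] [Module ℂ V]
    (ρ : ExtWittRep n S B V)
    (hnt : ρ.IsNontrivial) (hw : ρ.IsWeightModule) (hub : ρ.UniformlyBounded)
    (hirr : ρ.IsIrreducible) :
    ∃ S0 : Submodule ℂ S,
      (∀ s ∈ S0, ∀ (m : Fin n → ℤ) (b : B), ρ.E s m b = 0) ∧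
      Module.finrank ℂ (S ⧸ S0) ≤ 1 ∧
      -- as a module for `𝔏(B)` (if `S0` is proper) or `Wₙ ⊗ B` (if `S0 = S`), `V` is
      -- irreducible … :
      ((S0 = ⊤ →
        (∃ x : V, x ≠ 0) ∧
        ∀ U : Submodule ℂ V,
          (∀ u r b, ∀ x ∈ U, ρ.D u r b x ∈ U) → U = ⊥ ∨ U = ⊤) ∧
       (∀ s₀ : S, s₀ ∉ S0 →
        (∃ x : V, x ≠ 0) ∧
        ∀ U : Submodule ℂ V,
          ((∀ u r b, ∀ x ∈ U, ρ.D u r b x ∈ U) ∧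
            (∀ (m : Fin n → ℤ) (b : B), ∀ x ∈ U, ρ.E s₀ m b x ∈ U)) →
          U = ⊥ ∨ U = ⊤)) ∧
      -- … and a single point evaluation module:
      ρ.IsSinglePointEval := by
  have : Nontrivial V := nontrivial_of_ne _ _ hirr.1.choose_spec
  have : IsNoetherianRing B := Algebra.FiniteType.isNoetherianRing ℂ B
  obtain ⟨N, hN⟩ := hub
  obtain ⟨u, hu⟩ := exists_pairC_ne_zero n
  let M := ρ.toBoundedRep hw hirr hN hu
  have hMD : ∀ r u b, M.X r (u, 0) b = ρ.D u r b := ρ.opX_fst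
  have hME : ∀ r s b, M.X r (0, s) b = ρ.E s r b := ρ.opX_snd
  have hMpair : ∀ r s, M.pair r (0, s) = 0 := fun r s => by
    simp [M, ExtWittRep.toBoundedRep, ExtWittRep.pairHom, pairC]
  obtain ⟨η, hη⟩ := M.exists_eval hn (by
    rcases hnt with ⟨u, r, b, x, hx⟩ | ⟨s, m, b, x, hx⟩
    · exact ⟨r, (u, 0), b, fun h => hx (by rw [← hMD, h, LinearMap.zero_apply])⟩
    · exact ⟨m, (0, s), b, fun h => hx (by rw [← hME, h, LinearMap.zero_apply])⟩)
  have hηE : ∀ s m b, ρ.E s m b = η b • ρ.E s m 1 := fun s m b => by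
    rw [← hME, hη, hME]
  have hscalar : ∀ s, ∃ c : ℂ, ρ.E s 0 1 = algebraMap ℂ _ c := by
    intro s
    rw [← hME]
    refine M.exists_eq_algebraMap (fun l x hx => M.X_zero_mem _ _ hx) fun r p b => ?_
    rw [commute_iff_eq, M.mul_X, hMpair]
    simp
  choose φ hφ using hscalar
  have hinj : Function.Injective (algebraMap ℂ (Module.End ℂ V)) :=
    FaithfulSMul.algebraMap_injective ℂ (Module.End ℂ V)
  let φl : S →ₗ[ℂ] ℂ :=
    { toFun := φ
      map_add' := fun s s' => hinj (by rw [map_add, ← hφ, ← hφ, ← hφ, ρ.E_add_s])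
      map_smul' := fun c s => hinj (by
        rw [RingHom.id_apply, smul_eq_mul, map_mul, ← hφ, ← hφ, ρ.E_smul_s, Algebra.smul_def]) }
  have hker : ∀ s, φ s = 0 → ∀ m b, ρ.E s m b = 0 := by
    intro s hs m b
    rw [hηE, ← hME, M.X_eq_zero_of_X_zero_eq_zero hn hη (fun r => hMpair r s)
      (by rw [hME, hφ, hs, map_zero]), smul_zero]
  refine ⟨LinearMap.ker φl, fun s hs => hker s hs, ?_, ⟨fun htop => ⟨hirr.1, fun U hU => ?_⟩,
    fun s₀ hs₀ => ⟨hirr.1, fun U hU => ?_⟩⟩, η, fun u r b => by rw [← hMD, hη, hMD], hηE⟩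
  · rw [φl.quotKerEquivRange.finrank_eq]
    exact (Submodule.finrank_le _).trans (Module.finrank_self ℂ).le
  · refine hirr.2 U ⟨hU, fun s m b x _ => ?_⟩
    rw [hker s (htop ▸ Submodule.mem_top : s ∈ LinearMap.ker φl), LinearMap.zero_apply]
    exact U.zero_mem
  · refine hirr.2 U ⟨hU.1, fun s m b x hx => ?_⟩
    have hs₀' : φl s₀ ≠ 0 := hs₀
    have hdecomp : s = (s - (φl s / φl s₀) • s₀) + (φl s / φl s₀) • s₀ := by abel
    have hzero : φl (s - (φl s / φl s₀) • s₀) = 0 := by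
      rw [map_sub, map_smul, smul_eq_mul, div_mul_cancel₀ _ hs₀', sub_self]
    rw [hdecomp, ρ.E_add_s, hker _ hzero, zero_add, ρ.E_smul_s, LinearMap.smul_apply]
    exact U.smul_mem _ (hU.2 m b x hx)
end
end

section
/- Let W be a non-zero weight module for the extended Witt algebra 𝔏_{S,n} (n ≥ 1) with uniformly bounded weight spaces. Then W contains a non-zero irreducible 𝔏_{S,n}-submodule. Furthermore: (1) if 0 is not a weight of W, then W is infinite dimensional and contains a non-trivial irreducible 𝔏_{S,n}-submodule; (2) if 0 is a weight of W, then either W is a finite dimensional trivial 𝔏_{S,n}-module, or W is infinite dimensional and W/W_1 contains a non-trivial irreducible 𝔏_{S,n}-submodule, where W_1 is the maximal finite dimensional trivial 𝔏_{S,n}-submodule of W. -/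
open scoped TensorProduct

noncomputable section

open LoopWitt

set_option maxHeartbeats 800000 in
/-- Let `v` be a vector in a module for the centreless Virasoro algebra with `L k v = 0` for
`k > d`, where `d ≤ 0`. If the spans of the `L a (L b v)` with `a + b` fixed have bounded
dimension, then `L d v = 0`: otherwise third differences of `a ↦ L (-a) (L (a - s) v)` over
disjoint windows are linearly independent, as the operators `L (s + d - p) * L p` show. -/
theorem LoopWitt.apply_eq_zero_of_bounded {V : Type*} [AddCommGroup V] [Module ℂ V]
    (L : ℤ → Module.End ℂ V)
    (hL : ∀ m k x, L m (L k x) = L k (L m x) + ((k : ℂ) - m) • L (m + k) x)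
    (v : V) (N : ℕ)
    (hX : ∀ s : ℤ, ∃ X : Submodule ℂ V, Module.rank ℂ X ≤ N ∧
      ∀ a b, a + b = s → L a (L b v) ∈ X)
    (d : ℤ) (hd : d ≤ 0) (hv : ∀ k, d < k → L k v = 0) : L d v = 0 := by
  have below : ∀ s a p : ℤ, a < p → s < a + p → p < s →
      L (s + d - p) (L p (L (-a) (L (a - s) v))) =
        (-((a : ℂ) + p) * (s + p - 2 * a) * (2 * s + d - 2 * p)) • L d v := by
    intro s a p h1 h2 h3
    rw [hL p (-a), hL p (a - s) v, hv p (by lia), hv (p + (a - s)) (by lia),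
      hL (p + -a) (a - s) v, hv (p + -a) (by lia)]
    simp only [map_zero, smul_zero, zero_add, map_smul]
    rw [hL (s + d - p) _ v, hv (s + d - p) (by lia),
      show s + d - p + (p + -a + (a - s)) = d by ring]
    simp only [map_zero, zero_add, smul_smul]
    push_cast
    congr 1
    ring
  have above : ∀ s a p : ℤ, p < a → s < a + p → a < s →
      L (s + d - p) (L p (L (-a) (L (a - s) v))) =
        (-((a : ℂ) + p) * (a + s + d - 2 * p) * (2 * s + d - 2 * a)) • L d v := by
    intro s a p h1 h2 h3
    rw [hL p (-a), hL p (a - s) v, hv p (by lia), hv (p + (a - s)) (by lia)]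
    simp only [map_zero, smul_zero, zero_add, map_smul]
    rw [hL (s + d - p) (p + -a), hL (s + d - p) (a - s) v, hv (s + d - p) (by lia),
      hv (s + d - p + (a - s)) (by lia),
      hL (s + d - p + (p + -a)) (a - s) v, hv (s + d - p + (p + -a)) (by lia),
      show s + d - p + (p + -a) + (a - s) = d by ring]
    simp only [map_zero, smul_zero, zero_add, smul_smul]
    push_cast
    congr 1
    ring
  by_contra hne
  obtain ⟨X, hX, hmem⟩ := hX (-(10 * N + 12))
  set s : ℤ := 10 * N + 12 with hs
  let g : ℤ → V := fun a => L (-a) (L (a - s) v)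
  let w : Fin (N + 1) → V := fun j =>
    g (5 * N + 7 + 5 * j) - (3 : ℂ) • g (5 * N + 8 + 5 * j)
      + (3 : ℂ) • g (5 * N + 9 + 5 * j) - g (5 * N + 10 + 5 * j)
  have hgX : ∀ a, g a ∈ X := fun a => hmem _ _ (by ring)
  have hwX : ∀ j, w j ∈ X := fun j =>
    X.sub_mem (X.add_mem (X.sub_mem (hgX _) (X.smul_mem _ (hgX _)))
      (X.smul_mem _ (hgX _))) (hgX _)
  let Y : ℤ → Module.End ℂ V := fun p => L (s + d - p) * L p
  have hY : ∀ (i : ℕ) (j : Fin (N + 1)), i ≤ N + 1 →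
      Y (5 * N + 6 + 5 * i) (w j) = if i ≤ j then (-12 : ℂ) • L d v else 0 := by
    intro i j hi
    have hj := j.2
    split_ifs with hij
    · simp only [w, Y, g, map_sub, map_add, map_smul, Module.End.mul_apply]
      rw [above, above, above, above] <;> try lia
      simp only [smul_smul, ← sub_smul, ← add_smul]
      congr 1
      push_cast
      ring
    · simp only [w, Y, g, map_sub, map_add, map_smul, Module.End.mul_apply]
      rw [below, below, below, below] <;> try lia
      simp only [smul_smul, ← sub_smul, ← add_smul]
      convert zero_smul ℂ _
      push_cast
      ring
  have hli : LinearIndependent ℂ w := by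
    rw [Fintype.linearIndependent_iff]
    intro c hc i
    have key : ∀ j : Fin (N + 1), (Y (5 * N + 6 + 5 * (i : ℕ)) -
        Y (5 * N + 6 + 5 * ((i : ℕ) + 1 : ℕ))) (w j) = if j = i then (-12 : ℂ) • L d v else 0 := by
      intro j
      rw [LinearMap.sub_apply, hY _ _ (by lia), hY _ _ (by lia)]
      by_cases h : j = i
      · subst h; simp
      · have : ((i : ℕ) ≤ j) ↔ ((i : ℕ) + 1 ≤ j) := by
          have : (j : ℕ) ≠ i := fun h' => h (Fin.ext h')
          lia
        simp [h, this]
    have := congrArg (Y (5 * N + 6 + 5 * (i : ℕ)) - Y (5 * N + 6 + 5 * ((i : ℕ) + 1 : ℕ))) hc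
    rw [map_sum, map_zero] at this
    simp only [map_smul, key, smul_ite, smul_zero, Finset.sum_ite_eq', Finset.mem_univ, if_true]
      at this
    simpa [hne] using this
  have hli' : LinearIndependent ℂ (fun j => (⟨w j, hwX j⟩ : X)) :=
    LinearIndependent.of_comp X.subtype hli
  have := hli'.cardinal_lift_le_rank.trans (Cardinal.lift_le.2 hX)
  simp only [Cardinal.mk_fin, Cardinal.lift_natCast, Nat.cast_le] at this
  lia
namespace LoopWitt

lemma pairC_add {n : ℕ} (u : Fin n → ℂ) (r s : Fin n → ℤ) :
    pairC u (r + s) = pairC u r + pairC u s := by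
  simp [pairC, mul_add, Finset.sum_add_distrib]

lemma pairC_sub {n : ℕ} (u : Fin n → ℂ) (r s : Fin n → ℤ) :
    pairC u (r - s) = pairC u r - pairC u s := by
  simp [pairC, mul_sub, Finset.sum_sub_distrib]

lemma pairC_zsmul {n : ℕ} (u : Fin n → ℂ) (k : ℤ) (r : Fin n → ℤ) :
    pairC u (k • r) = k * pairC u r := by
  simp [pairC, Finset.mul_sum, mul_left_comm]

lemma pairC_zero {n : ℕ} (u : Fin n → ℂ) : pairC u 0 = 0 := by
  simp [pairC]

lemma add_pairC {n : ℕ} (u u' : Fin n → ℂ) (r : Fin n → ℤ) :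
    pairC (u + u') r = pairC u r + pairC u' r := by
  simp [pairC, add_mul, Finset.sum_add_distrib]

/-- The inclusion `ℤⁿ ⊆ ℂⁿ`. -/
def toC {n : ℕ} (r : Fin n → ℤ) : Fin n → ℂ := fun i => (r i : ℂ)

lemma toC_add {n : ℕ} (r s : Fin n → ℤ) : toC (r + s) = toC r + toC s := by
  ext i; simp [toC]

lemma pairCC_add_toC {n : ℕ} (u lam : Fin n → ℂ) (r : Fin n → ℤ) :
    pairCC u (lam + toC r) = pairCC u lam + pairC u r := by
  simp [pairCC, pairC, toC, mul_add, Finset.sum_add_distrib]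

lemma exists_pairC_eq_one {n : ℕ} {r : Fin n → ℤ} (hr : r ≠ 0) : ∃ u, pairC u r = 1 := by
  obtain ⟨i, hi⟩ := Function.ne_iff.1 hr
  refine ⟨Pi.single i ((r i : ℂ)⁻¹), ?_⟩
  rw [pairC, Finset.sum_eq_single i]
  · simpa using inv_mul_cancel₀ (Int.cast_ne_zero.2 hi)
  · intro j _ hj
    simp [hj]
  · simp

namespace ExtWittRep

variable {n : ℕ} {S : Type*} [AddCommGroup S] [Module ℂ S]
  {V : Type*} [AddCommGroup V] [Module ℂ V] (ρ : ExtWittRep n S ℂ V)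

lemma D_eq_smul (u r) (b : ℂ) : ρ.D u r b = b • ρ.D u r 1 := by
  rw [← ρ.D_smul_b, smul_eq_mul, mul_one]

lemma E_eq_smul (s m) (b : ℂ) : ρ.E s m b = b • ρ.E s m 1 := by
  rw [← ρ.E_smul_b, smul_eq_mul, mul_one]

lemma D_D_apply (u r v s) (x : V) : ρ.D u r 1 (ρ.D v s 1 x) =
    ρ.D v s 1 (ρ.D u r 1 x) + ρ.D (pairC u s • v - pairC v r • u) (r + s) 1 x := by
  have := LinearMap.congr_fun (ρ.comm_DD u r 1 v s 1) x
  rw [Ring.lie_def, mul_one] at this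
  rw [← this]
  simp

lemma D_D_apply_self (u r s) (x : V) : ρ.D u r 1 (ρ.D u s 1 x) =
    ρ.D u s 1 (ρ.D u r 1 x) + pairC u (s - r) • ρ.D u (r + s) 1 x := by
  rw [D_D_apply, ← sub_smul, ρ.D_smul_u, pairC_sub, LinearMap.smul_apply]

lemma D_E_apply (u r s m) (x : V) : ρ.D u r 1 (ρ.E s m 1 x) =
    ρ.E s m 1 (ρ.D u r 1 x) + pairC u m • ρ.E s (m + r) 1 x := by
  have := LinearMap.congr_fun (ρ.comm_DE u r 1 s m 1) x
  rw [Ring.lie_def, mul_one] at this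
  rw [← LinearMap.smul_apply, ← this]
  simp

lemma E_E_apply (s m s' m') (x : V) : ρ.E s m 1 (ρ.E s' m' 1 x) =
    ρ.E s' m' 1 (ρ.E s m 1 x) := by
  have := LinearMap.congr_fun (ρ.comm_EE s m 1 s' m' 1) x
  rw [Ring.lie_def] at this
  exact sub_eq_zero.1 (by simpa using this)

lemma D_mem_weightSpace {lam c} {x : V} (hx : x ∈ ρ.weightSpace lam c) (u r) :
    ρ.D u r 1 x ∈ ρ.weightSpace (lam + toC r) c := by
  refine ⟨fun w => ?_, fun s => ?_⟩
  · rw [D_D_apply, hx.1, pairC_zero, zero_smul, sub_zero, ρ.D_smul_u, zero_add, map_smul,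
      LinearMap.smul_apply, ← add_smul, pairCC_add_toC]
  · have := ρ.D_E_apply u r s 0 x
    rw [pairC_zero, zero_smul, add_zero] at this
    rw [← this, hx.2, map_smul]

lemma E_mem_weightSpace {lam c} {x : V} (hx : x ∈ ρ.weightSpace lam c) (s m) :
    ρ.E s m 1 x ∈ ρ.weightSpace (lam + toC m) c := by
  refine ⟨fun w => ?_, fun s' => ?_⟩
  · rw [D_E_apply, hx.1, map_smul, add_zero, ← add_smul, pairCC_add_toC]
  · rw [E_E_apply, hx.2, map_smul]

lemma D_mem_of_forall_ne {p : Submodule ℂ V} {r r' : Fin n → ℤ} (hr' : r' ≠ 0) {x : V}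
    (h : ∀ u, pairC u r' ≠ 0 → ρ.D u r 1 x ∈ p) (u) : ρ.D u r 1 x ∈ p := by
  by_cases hu : pairC u r' = 0
  · obtain ⟨w, hw⟩ := exists_pairC_eq_one hr'
    have h1 := h (u + w) (by simp [add_pairC, hu, hw])
    rw [ρ.D_add_u, LinearMap.add_apply] at h1
    exact (p.add_mem_iff_left (h w (by simp [hw]))).1 h1
  · exact h u hu

lemma D_add_eq_zero {r s : Fin n → ℤ} (hrs : r ≠ s) {x : V}
    (hr : ∀ u, ρ.D u r 1 x = 0) (hs : ∀ u, ρ.D u s 1 x = 0) (u) : ρ.D u (r + s) 1 x = 0 := by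
  refine (Submodule.mem_bot ℂ).1 (ρ.D_mem_of_forall_ne (sub_ne_zero.2 hrs.symm) (fun u hu => ?_) u)
  have := ρ.D_D_apply_self u r s x
  rw [hr, hs, map_zero, map_zero, zero_add] at this
  exact (smul_eq_zero.1 this.symm).resolve_left hu

lemma mem_trivVectors_iff {x : V} : x ∈ ρ.trivVectors ↔
    (∀ u r, ρ.D u r 1 x = 0) ∧ ∀ s m, ρ.E s m 1 x = 0 := by
  refine ⟨fun h => ⟨fun u r => h.1 u r 1, fun s m => h.2 s m 1⟩, fun h => ⟨fun u r b => ?_,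
    fun s m b => ?_⟩⟩
  · rw [D_eq_smul, LinearMap.smul_apply, h.1, smul_zero]
  · rw [E_eq_smul, LinearMap.smul_apply, h.2, smul_zero]

lemma trivVectors_le_weightSpace : ρ.trivVectors ≤ ρ.weightSpace 0 0 := fun x hx =>
  ⟨fun u => by simp [hx.1, pairCC], fun s => by simp [hx.2]⟩

lemma invariant_iff {U : Submodule ℂ V} : ρ.Invariant U ↔
    (∀ u r, ∀ x ∈ U, ρ.D u r 1 x ∈ U) ∧ ∀ s m, ∀ x ∈ U, ρ.E s m 1 x ∈ U := by
  refine ⟨fun h => ⟨fun u r => h.1 u r 1, fun s m => h.2 s m 1⟩, fun h => ⟨fun u r b x hx => ?_,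
    fun s m b x hx => ?_⟩⟩
  · rw [D_eq_smul]
    exact U.smul_mem _ (h.1 u r x hx)
  · rw [E_eq_smul]
    exact U.smul_mem _ (h.2 s m x hx)

lemma invariant_trivVectors : ρ.Invariant ρ.trivVectors :=
  ⟨fun u r b x hx => by rw [hx.1]; exact zero_mem _,
    fun s m b x hx => by rw [hx.2]; exact zero_mem _⟩

lemma E_eq_zero_of_D_eq_zero {x : V} {m : Fin n → ℤ} (hm : m ≠ 0) {s : S}
    (hD : ∀ u r, ρ.D u r 1 x = 0) (hE : ρ.E s m 1 x = 0) (m') : ρ.E s m' 1 x = 0 := by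
  obtain ⟨u, hu⟩ := exists_pairC_eq_one hm
  have := ρ.D_E_apply u (m' - m) s m x
  rw [hD, hE, map_zero, map_zero, zero_add, hu, one_smul, add_sub_cancel] at this
  exact this.symm

/-- The Lie algebra is perfect, so a vector which is trivial modulo trivial vectors is trivial. -/
lemma mem_trivVectors_of_forall_mem (hn : 1 ≤ n) {x : V}
    (hD : ∀ u r, ρ.D u r 1 x ∈ ρ.trivVectors) (hE : ∀ s m, ρ.E s m 1 x ∈ ρ.trivVectors) :
    x ∈ ρ.trivVectors := by
  have hne : (Pi.single ⟨0, hn⟩ 1 : Fin n → ℤ) ≠ 0 := by simp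
  have key : ∀ r s : Fin n → ℤ, r ≠ s → ∀ u, ρ.D u (r + s) 1 x = 0 := fun r s hrs u => by
    refine (Submodule.mem_bot ℂ).1
      (ρ.D_mem_of_forall_ne (sub_ne_zero.2 hrs.symm) (fun u hu => ?_) u)
    have := ρ.D_D_apply_self u r s x
    rw [(hD _ _).1, (hD _ _).1, zero_add] at this
    exact (smul_eq_zero.1 this.symm).resolve_left hu
  refine (ρ.mem_trivVectors_iff).2 ⟨fun u r => ?_, fun s m => ?_⟩
  · by_cases hr : r = 0
    · subst hr
      have := key (Pi.single ⟨0, hn⟩ 1) (-Pi.single ⟨0, hn⟩ 1) (fun h => hne ?_) u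
      · rwa [add_neg_cancel] at this
      · exact self_eq_neg.1 h
    · simpa using key r 0 hr u
  · obtain ⟨u, hu⟩ := exists_pairC_eq_one hne
    have := ρ.D_E_apply u (m - Pi.single ⟨0, hn⟩ 1) s (Pi.single ⟨0, hn⟩ 1) x
    rw [(hE _ _).1, (hD _ _).2, zero_add, hu, one_smul, add_sub_cancel] at this
    exact this.symm

/-- If `D(u, k r)` kills a weight vector for all `k ≥ 1`, it does so for all `k`. -/
lemma D_zsmul_eq_zero (hub : ρ.UniformlyBounded) {lam c} {x : V}
    (hx : x ∈ ρ.weightSpace lam c) {r : Fin n → ℤ} (hr : r ≠ 0)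
    (h : ∀ k : ℤ, 1 ≤ k → ∀ u, ρ.D u (k • r) 1 x = 0) (k : ℤ) (u) :
    ρ.D u (k • r) 1 x = 0 := by
  obtain ⟨N, hN⟩ := hub
  refine (Submodule.mem_bot ℂ).1 (ρ.D_mem_of_forall_ne hr (fun u hu => ?_) u)
  have hvan : ∀ j : ℕ, ∀ k : ℤ, -j < k → ρ.D u (k • r) 1 x = 0 := by
    intro j
    induction j with
    | zero => exact fun k hk => h k (by lia) u
    | succ j ih =>
      intro k hk
      by_cases hk' : -j < k
      · exact ih k hk'
      have hkj : k = -j := by push_cast at hk; lia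
      have := apply_eq_zero_of_bounded (fun k => (pairC u r)⁻¹ • ρ.D u (k • r) 1) ?_ x N ?_ k
        (by lia) (fun l hl => by rw [LinearMap.smul_apply, ih l (by lia), smul_zero])
      · exact (smul_eq_zero.1 this).resolve_left (inv_ne_zero hu)
      · intro a b y
        simp only [LinearMap.smul_apply, map_smul]
        rw [D_D_apply_self, ← sub_smul, pairC_zsmul, ← add_smul]
        simp only [smul_add, smul_smul]
        congr 2
        push_cast
        field_simp
      · intro s
        refine ⟨ρ.weightSpace (lam + toC (s • r)) c, hN _ _, ?_⟩
        rintro a b rfl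
        simp only [LinearMap.smul_apply, map_smul]
        refine Submodule.smul_mem _ _ (Submodule.smul_mem _ _ ?_)
        have := ρ.D_mem_weightSpace (ρ.D_mem_weightSpace hx u (b • r)) u (a • r)
        rwa [add_assoc, ← toC_add, ← add_smul, add_comm b] at this
  exact (Submodule.mem_bot ℂ).2 (hvan (k.natAbs + 1) k (by lia))

/-- A weight vector killed by all elements of degrees close to some `r ≠ 0` is trivial. -/
lemma mem_trivVectors_of_box (hub : ρ.UniformlyBounded) {lam c} {x : V}
    (hx : x ∈ ρ.weightSpace lam c) {r : Fin n → ℤ} (hr : r ≠ 0)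
    (hD : ∀ e ∈ Finset.Icc (-1 : Fin n → ℤ) 1, ∀ u, ρ.D u (r + e) 1 x = 0)
    (hE : ∀ s, ρ.E s r 1 x = 0) : x ∈ ρ.trivVectors := by
  let P : (Fin n → ℤ) → Prop := fun m => ∀ u, ρ.D u m 1 x = 0
  have hadd : ∀ {m m'}, P m → P m' → m ≠ m' → P (m + m') := fun h h' hne =>
    ρ.D_add_eq_zero hne h h'
  let B : Set (Fin n → ℤ) := {e | ∃ i, e = Pi.single i 1 ∨ e = -Pi.single i 1}
  have hBneg : ∀ e ∈ B, -e ∈ B := by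
    rintro e ⟨i, rfl | rfl⟩
    · exact ⟨i, Or.inr rfl⟩
    · exact ⟨i, Or.inl (neg_neg _)⟩
  have hBodd : ∀ e ∈ B, ∃ i, e i = 1 ∨ e i = -1 := by
    rintro e ⟨i, rfl | rfl⟩
    · exact ⟨i, Or.inl (by simp)⟩
    · exact ⟨i, Or.inr (by simp)⟩
  have hB0 : ∀ e ∈ B, e ≠ 0 := by
    rintro e he rfl
    obtain ⟨i, hi⟩ := hBodd _ he
    simp at hi
  have hBmem : ∀ e ∈ B, e ∈ Finset.Icc (-1 : Fin n → ℤ) 1 := by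
    rintro e ⟨i, rfl | rfl⟩ <;> rw [Finset.mem_Icc] <;> constructor <;> intro j <;>
      by_cases h : j = i <;> simp [h]
  have hr0 : P r := by simpa using hD 0 (by simp)
  have hrB : ∀ e ∈ B, P (r + e) := fun e he => hD e (hBmem e he)
  obtain ⟨i₀, -⟩ := Function.ne_iff.1 hr
  have hi₀ : (Pi.single i₀ 1 : Fin n → ℤ) ∈ B := ⟨i₀, Or.inl rfl⟩
  have hpos : ∀ k : ℤ, 1 ≤ k → P (k • r) ∧ ∀ e ∈ B, P (k • r + e) := by
    intro k hk
    induction k, hk using Int.leInduction with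
    | base => simpa using And.intro hr0 hrB
    | succ k hk ih =>
      refine ⟨?_, fun e he => ?_⟩
      · by_cases h1 : k = 1
        · subst h1
          have := hadd (hrB _ hi₀) (hrB _ (hBneg _ hi₀)) (fun h => hB0 _ hi₀
            (self_eq_neg.1 (add_left_cancel h)))
          convert this using 1
          rw [add_smul, one_smul]
          abel
        · have := hadd ih.1 hr0 (fun h => ?_)
          · rwa [add_smul, one_smul]
          · have h2 : (k - 1) • r = 0 := by rw [sub_smul, one_smul, h, sub_self]
            rcases smul_eq_zero.1 h2 with h3 | h3
            · lia
            · exact hr h3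
      · by_cases h1 : k • r + e = r
        · have := hadd ih.1 (hrB e he) (fun h => hB0 e he ?_)
          · convert this using 1
            rw [add_smul, one_smul]
            abel
          · rw [h] at h1
            have : e + e = 0 := by
              rw [add_assoc] at h1
              exact add_eq_left.1 h1
            exact self_eq_neg.1 (eq_neg_of_add_eq_zero_left this)
        · convert hadd (ih.2 e he) hr0 h1 using 1
          rw [add_smul, one_smul]
          abel
  have hall : ∀ k : ℤ, P (k • r) := fun k u =>
    ρ.D_zsmul_eq_zero hub hx hr (fun k hk => (hpos k hk).1) k u
  have hneg : P (-r) := by simpa using hall (-1)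
  have hPB : ∀ e ∈ B, P e := by
    intro e he
    have := hadd hneg (hrB e he) (fun h => ?_)
    · simpa using this
    · obtain ⟨i, hi⟩ := hBodd e he
      have := congrFun h i
      simp only [Pi.neg_apply, Pi.add_apply] at this
      lia
  have hPB2 : ∀ e ∈ B, P (e + e) := by
    intro e he
    by_cases h : -r = e
    · convert hall (-2) using 1
      rw [← h, neg_smul, two_smul]
      abel
    · convert hadd (hrB e he) (hadd hneg (hPB e he) h) (fun h' => hr ?_) using 1
      · abel
      · exact self_eq_neg.1 (add_right_cancel h')
  have hstep : ∀ e ∈ B, ∀ m, P m → P (m + e) := by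
    intro e he m hm
    by_cases h : m = e
    · exact h ▸ hPB2 e he
    · exact hadd hm (hPB e he) h
  have hline : ∀ (i : Fin n) (k : ℤ) (m), P m → P (m + k • Pi.single i 1) := by
    intro i k m hm
    induction k using Int.induction_on with
    | zero => simpa using hm
    | succ k ih =>
      rw [add_smul, one_smul, ← add_assoc]
      exact hstep _ ⟨i, Or.inl rfl⟩ _ ih
    | pred k ih =>
      rw [sub_smul, one_smul, sub_eq_add_neg, ← add_assoc]
      exact hstep _ ⟨i, Or.inr rfl⟩ _ ih
  have hsum : ∀ (m : Fin n → ℤ) (s : Finset (Fin n)), P (∑ i ∈ s, m i • Pi.single i 1) := by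
    intro m s
    induction s using Finset.induction_on with
    | empty => simpa using hall 0
    | insert i s hi ih =>
      rw [Finset.sum_insert hi, add_comm]
      exact hline _ _ _ ih
  have hDall : ∀ u m, ρ.D u m 1 x = 0 := fun u m => by
    have : m = ∑ i, m i • Pi.single i 1 := by
      simpa using (pi_eq_sum_univ' m)
    rw [this]
    exact hsum m _ u
  exact ρ.mem_trivVectors_iff.2
    ⟨hDall, fun s m => ρ.E_eq_zero_of_D_eq_zero hr hDall (hE s) m⟩

/-- Weight components of elements of an invariant submodule belong to it. -/
lemma mem_of_sum_mem {ι : Type*} {g : ι → (Fin n → ℂ) × (S →ₗ[ℂ] ℂ)}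
    (hg : Function.Injective g) {U : Submodule ℂ V} (hU : ρ.Invariant U) (t : Finset ι)
    (f : ι → V) (hf : ∀ i ∈ t, f i ∈ ρ.weightSpace (g i).1 (g i).2)
    (h : ∑ i ∈ t, f i ∈ U) : ∀ i ∈ t, f i ∈ U := by
  classical
  induction t using Finset.induction_on generalizing f with
  | empty => simp
  | insert i₀ t hi₀ ih =>
    have key : ∀ j ∈ t, f j ∈ U := by
      intro j hj
      have hne : g j ≠ g i₀ := fun h => hi₀ (hg h ▸ hj)
      obtain ⟨T, χ, hTU, hTχ, hχ⟩ : ∃ (T : Module.End ℂ V)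
          (χ : (Fin n → ℂ) × (S →ₗ[ℂ] ℂ) → ℂ), (∀ x ∈ U, T x ∈ U) ∧
          (∀ p, ∀ x ∈ ρ.weightSpace p.1 p.2, T x = χ p • x) ∧ χ (g j) ≠ χ (g i₀) := by
        by_cases h1 : (g j).1 = (g i₀).1
        · have h2 : (g j).2 ≠ (g i₀).2 := fun h2 => hne (Prod.ext h1 h2)
          obtain ⟨s, hs⟩ := DFunLike.ne_iff.1 h2
          exact ⟨ρ.E s 0 1, fun p => p.2 s, hU.2 s 0 1, fun p x hx => hx.2 s, hs⟩
        · obtain ⟨i, hi⟩ := Function.ne_iff.1 h1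
          exact ⟨ρ.D (Pi.single i 1) 0 1, fun p => pairCC (Pi.single i 1) p.1, hU.1 _ 0 1,
            fun p x hx => hx.1 _, by simpa [pairCC, Pi.single_apply] using hi⟩
      have hmem := ih (fun i => (χ (g i) - χ (g i₀)) • f i)
        (fun i hi => Submodule.smul_mem _ _ (hf i (Finset.mem_insert_of_mem hi))) (by
          have h3 := U.sub_mem (hTU _ h) (U.smul_mem (χ (g i₀)) h)
          rw [map_sum, Finset.smul_sum, ← Finset.sum_sub_distrib, Finset.sum_insert hi₀,
            hTχ _ _ (hf i₀ (Finset.mem_insert_self _ _)), sub_self, zero_add] at h3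
          convert h3 using 1
          refine Finset.sum_congr rfl fun i hi => ?_
          rw [hTχ _ _ (hf i (Finset.mem_insert_of_mem hi)), sub_smul]) j hj
      exact (U.smul_mem_iff (sub_ne_zero.2 hχ)).1 hmem
    rw [Finset.sum_insert hi₀] at h
    intro i hi
    rcases Finset.mem_insert.1 hi with rfl | hi
    · exact (U.add_mem_iff_left (U.sum_mem key)).1 h
    · exact key i hi

/-- An invariant submodule not contained in `T` has a weight vector outside `T`. -/
lemma exists_weight_vector {ι : Type*} {g : ι → (Fin n → ℂ) × (S →ₗ[ℂ] ℂ)}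
    (hg : Function.Injective g) {U T : Submodule ℂ V} (hU : ρ.Invariant U)
    (hUg : U ≤ ⨆ i, ρ.weightSpace (g i).1 (g i).2) (hUT : ¬ U ≤ T) :
    ∃ i, ∃ x ∈ U, x ∈ ρ.weightSpace (g i).1 (g i).2 ∧ x ∉ T := by
  obtain ⟨x, hx, hxT⟩ := SetLike.not_le_iff_exists.1 hUT
  obtain ⟨f, hf, rfl⟩ := (Submodule.mem_iSup_iff_exists_finsupp _ _).1 (hUg hx)
  by_contra! hcon
  refine hxT (T.sum_mem fun i hi => hcon i _ ?_ (hf i))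
  exact ρ.mem_of_sum_mem hg hU f.support f (fun i _ => hf i) hx i hi

/-- A weight vector of non-zero weight which is trivial vanishes. -/
lemma eq_zero_of_mem_trivVectors {lam c} (hlam : lam ≠ 0) {x : V}
    (hx : x ∈ ρ.weightSpace lam c) (hxT : x ∈ ρ.trivVectors) : x = 0 := by
  obtain ⟨i, hi⟩ := Function.ne_iff.1 hlam
  have := hx.1 (Pi.single i 1)
  rw [hxT.1] at this
  exact (smul_eq_zero.1 this.symm).resolve_left (by simpa [pairCC, Pi.single_apply] using hi)

lemma toC_injective : Function.Injective (toC : (Fin n → ℤ) → Fin n → ℂ) := fun r s h => by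
  ext i
  exact Int.cast_injective (congrFun h i)

/-- There is a minimal invariant submodule among those with non-trivial vectors. -/
lemma exists_minimal_not_le_trivVectors (hn : 1 ≤ n) (hw : ρ.IsWeightModule)
    (hub : ρ.UniformlyBounded) (hT : ρ.trivVectors ≠ ⊤) :
    ∃ U : Submodule ℂ V, ρ.Invariant U ∧ ¬ U ≤ ρ.trivVectors ∧
      ∀ U' ≤ U, ρ.Invariant U' → U' ≤ ρ.trivVectors ∨ U' = U := by
  obtain ⟨⟨lam, c⟩, x, -, hx, hxT⟩ := ρ.exists_weight_vector (g := id) (U := ⊤)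
    Function.injective_id ⟨fun _ _ _ _ _ => trivial, fun _ _ _ _ _ => trivial⟩ hw.ge
    (T := ρ.trivVectors) (fun h => hT (top_le_iff.1 h))
  let g : (Fin n → ℤ) → (Fin n → ℂ) × (S →ₗ[ℂ] ℂ) := fun r => (lam + toC r, c)
  have hg : Function.Injective g := fun r s h =>
    toC_injective (add_left_cancel (congrArg Prod.fst h))
  let W : Submodule ℂ V := ⨆ r, ρ.weightSpace (g r).1 (g r).2
  have hWinv : ρ.Invariant W := by
    refine ρ.invariant_iff.2 ⟨fun u r => ?_, fun s r => ?_⟩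
    · refine (iSup_le fun r' y hy => ?_ : W ≤ W.comap (ρ.D u r 1))
      refine Submodule.mem_iSup_of_mem (r' + r) ?_
      simpa [g, toC_add, add_assoc] using ρ.D_mem_weightSpace hy u r
    · refine (iSup_le fun r' y hy => ?_ : W ≤ W.comap (ρ.E s r 1))
      refine Submodule.mem_iSup_of_mem (r' + r) ?_
      simpa [g, toC_add, add_assoc] using ρ.E_mem_weightSpace hy s r
  have hWT : ¬ W ≤ ρ.trivVectors := fun h => hxT (h (Submodule.mem_iSup_of_mem 0 (by
    have h0 : toC (0 : Fin n → ℤ) = 0 := by ext i; simp [toC]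
    simpa [g, h0] using hx)))
  obtain ⟨t, ht⟩ : ∃ t : Fin n → ℤ, ∀ e ∈ Finset.Icc (-1 : Fin n → ℤ) 1,
      lam + toC (t + e) ≠ 0 := by
    by_contra! hcon
    obtain ⟨e, he, h⟩ := hcon 0
    obtain ⟨e', he', h'⟩ := hcon 3
    have h2 := congrFun (toC_injective (add_left_cancel (h.trans h'.symm))) ⟨0, hn⟩
    rw [Finset.mem_Icc] at he he'
    have h3 := he.2 ⟨0, hn⟩
    have h4 := he'.1 ⟨0, hn⟩
    simp at h2 h3 h4
    lia
  let χ : (Fin n → ℤ) → Submodule ℂ V := fun e => ρ.weightSpace (lam + toC (t + e)) c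
  have hfin : ∀ e, FiniteDimensional ℂ (χ e) := fun e => by
    obtain ⟨N, hN⟩ := hub
    exact Module.rank_lt_aleph0_iff.1 ((hN _ _).trans_lt Cardinal.natCast_lt_aleph0)
  have hfinU : ∀ (U : Submodule ℂ V) e, FiniteDimensional ℂ ↥(U ⊓ χ e) := fun U e =>
    Submodule.finiteDimensional_of_le inf_le_right
  have hF : ∀ U : Submodule ℂ V, ρ.Invariant U → U ≤ W → ¬ U ≤ ρ.trivVectors →
      ∃ e ∈ Finset.Icc (-1 : Fin n → ℤ) 1, ∃ y ∈ U ⊓ χ e, y ≠ 0 := by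
    intro U hU hUW hUT
    obtain ⟨r, y, hyU, hy, hyT⟩ := ρ.exists_weight_vector hg hU hUW hUT
    have hy0 : y ≠ 0 := fun h => hyT (h ▸ zero_mem _)
    by_contra! hcon
    have hweight : ∀ e, g r = (lam + toC r, c) ∧
        lam + toC r + toC (t - r + e) = lam + toC (t + e) := fun e => ⟨rfl, by
      rw [add_assoc, ← toC_add]
      congr 2
      abel⟩
    have h0 : (0 : Fin n → ℤ) ∈ Finset.Icc (-1 : Fin n → ℤ) 1 := by simp
    refine hyT (ρ.mem_trivVectors_of_box hub hy (r := t - r) ?_ (fun e he u => ?_)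
      (fun s => ?_))
    · intro h
      refine hy0 (hcon 0 h0 y ⟨hyU, ?_⟩)
      obtain rfl := sub_eq_zero.1 h
      simpa [χ] using hy
    · refine hcon e he _ ⟨hU.1 _ _ _ _ hyU, ?_⟩
      have := ρ.D_mem_weightSpace hy u (t - r + e)
      rwa [(hweight e).1, (hweight e).2] at this
    · refine hcon 0 h0 _ ⟨hU.2 _ _ _ _ hyU, ?_⟩
      have := ρ.E_mem_weightSpace hy s (t - r + 0)
      rw [(hweight 0).1, (hweight 0).2] at this
      simpa [χ] using this
  let f : Submodule ℂ V → ℕ := fun U =>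
    ∑ e ∈ Finset.Icc (-1 : Fin n → ℤ) 1, Module.finrank ℂ ↥(U ⊓ χ e)
  obtain ⟨U, ⟨hU, hUW, hUT⟩, hmin⟩ := (measure f).wf.has_min
    {U | ρ.Invariant U ∧ U ≤ W ∧ ¬ U ≤ ρ.trivVectors} ⟨W, hWinv, le_rfl, hWT⟩
  let A : Set (Submodule ℂ V) := {U' | ρ.Invariant U' ∧ U' ≤ U ∧ ¬ U' ≤ ρ.trivVectors}
  have hA : ∀ U' ∈ A, ∀ e ∈ Finset.Icc (-1 : Fin n → ℤ) 1, U ⊓ χ e ≤ U' := by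
    rintro U' ⟨hU', hU'U, hU'T⟩ e he
    have hle : ∀ e, U' ⊓ χ e ≤ U ⊓ χ e := fun e => inf_le_inf_right _ hU'U
    have hfle : f U ≤ f U' := not_lt.1 (hmin U' ⟨hU', hU'U.trans hUW, hU'T⟩)
    have heq := (Finset.sum_eq_sum_iff_of_le
      (fun e _ => Submodule.finrank_mono (hle e))).1
      (le_antisymm (Finset.sum_le_sum fun e _ => Submodule.finrank_mono (hle e)) hfle) e he
    rw [← Submodule.eq_of_le_of_finrank_eq (hle e) heq]
    exact inf_le_left
  refine ⟨sInf A, ?_, ?_, ?_⟩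
  · refine ⟨fun u r b y hy => ?_, fun s m b y hy => ?_⟩ <;>
      rw [Submodule.mem_sInf] at hy ⊢ <;> intro U' hU'
    · exact hU'.1.1 u r b y (hy U' hU')
    · exact hU'.1.2 s m b y (hy U' hU')
  · intro hle
    obtain ⟨e, he, y, hy, hy0⟩ := hF U hU hUW hUT
    exact hy0 (ρ.eq_zero_of_mem_trivVectors (ht e he) hy.2
      (hle (Submodule.mem_sInf.2 fun U' hU' => hA U' hU' e he hy)))
  · intro U' hle hU'
    by_cases h : U' ≤ ρ.trivVectors
    · exact Or.inl h
    · exact Or.inr (le_antisymm hle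
        (sInf_le ⟨hU', hle.trans (sInf_le ⟨hU, le_rfl, hUT⟩), h⟩))

lemma trivVectors_eq_top_of_finiteDimensional (hn : 1 ≤ n) (hw : ρ.IsWeightModule)
    (hub : ρ.UniformlyBounded) [FiniteDimensional ℂ V] : ρ.trivVectors = ⊤ := by
  by_contra hT
  obtain ⟨⟨lam, c⟩, x, -, hx, hxT⟩ := ρ.exists_weight_vector (g := id) (U := ⊤)
    Function.injective_id ⟨fun _ _ _ _ _ => trivial, fun _ _ _ _ _ => trivial⟩ hw.ge
    (T := ρ.trivVectors) (fun h => hT (top_le_iff.1 h))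
  let T := ρ.D (Pi.single ⟨0, hn⟩ 1) 0 1
  have hfin : {k : ℤ | T.HasEigenvalue (lam ⟨0, hn⟩ + k)}.Finite :=
    Set.Finite.preimage (f := fun k : ℤ => lam ⟨0, hn⟩ + (k : ℂ))
      (fun a _ b _ h => Int.cast_injective (add_left_cancel h))
      (Module.End.finite_hasEigenvalue T)
  obtain ⟨K, hK⟩ := hfin.bddAbove
  have hvan : ∀ r : Fin n → ℤ, K < r ⟨0, hn⟩ → ∀ y ∈ ρ.weightSpace (lam + toC r) c, y = 0 := by
    intro r hr y hy
    by_contra hy0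
    refine hr.not_ge (hK (Module.End.hasEigenvalue_of_hasEigenvector (x := y) ⟨?_, hy0⟩))
    rw [Module.End.mem_eigenspace_iff]
    simpa [pairCC, toC, Pi.single_apply] using hy.1 (Pi.single ⟨0, hn⟩ 1)
  refine hxT (ρ.mem_trivVectors_of_box hub hx (r := fun _ => |K| + 2) ?_ (fun e he u => ?_)
    (fun s => ?_))
  · intro h
    have := congrFun h ⟨0, hn⟩
    simp only [Pi.zero_apply] at this
    have := abs_nonneg K
    lia
  · refine hvan _ ?_ _ (ρ.D_mem_weightSpace hx u _)
    have h3 := (Finset.mem_Icc.1 he).1 ⟨0, hn⟩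
    have := le_abs_self K
    simp only [Pi.neg_apply, Pi.one_apply, Pi.add_apply] at h3 ⊢
    lia
  · refine hvan _ ?_ _ (ρ.E_mem_weightSpace hx s _)
    have := le_abs_self K
    lia

end ExtWittRep

end LoopWitt

/-- A non-zero uniformly bounded weight module `W` over `𝔏_{S,n}`
(the case `B = ℂ`) contains a non-zero irreducible submodule; if `0` is not a weight it
is infinite dimensional and contains a non-trivial irreducible submodule; if `0` is a
weight it is either finite dimensional and trivial, or infinite dimensional and the
quotient by the (maximal, finite dimensional) trivial submodule `W₁` contains a
non-trivial irreducible submodule. -/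
theorem stmt7 {n : ℕ} (hn : 1 ≤ n) {S V : Type*}
    [AddCommGroup S] [Module ℂ S] [FiniteDimensional ℂ S]
    [AddCommGroup V] [Module ℂ V]
    (ρ : ExtWittRep n S ℂ V)
    (hne : ∃ x : V, x ≠ 0) (hw : ρ.IsWeightModule) (hub : ρ.UniformlyBounded) :
    -- `W` contains a non-zero irreducible `𝔏_{S,n}`-submodule
    (∃ U : Submodule ℂ V, U ≠ ⊥ ∧ ρ.Invariant U ∧
      ∀ U' : Submodule ℂ V, U' ≤ U → ρ.Invariant U' → U' = ⊥ ∨ U' = U) ∧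
    -- (1) `0 ∉ Supp W`
    (ρ.weightSpace 0 0 = ⊥ →
      ¬ FiniteDimensional ℂ V ∧
      ∃ U : Submodule ℂ V, U ≠ ⊥ ∧ ρ.Invariant U ∧
        (∀ U' : Submodule ℂ V, U' ≤ U → ρ.Invariant U' → U' = ⊥ ∨ U' = U) ∧
        ((∃ u r b, ∃ x ∈ U, ρ.D u r b x ≠ 0) ∨ ∃ s m b, ∃ x ∈ U, ρ.E s m b x ≠ 0)) ∧
    -- (2) `0 ∈ Supp W`
    (ρ.weightSpace 0 0 ≠ ⊥ →
      (FiniteDimensional ℂ V ∧ ∀ x : V, x ∈ ρ.trivVectors) ∨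
      (¬ FiniteDimensional ℂ V ∧
        ∃ U : Submodule ℂ V, ρ.trivVectors < U ∧ ρ.Invariant U ∧
          ((∃ u r b, ∃ x ∈ U, ρ.D u r b x ∉ ρ.trivVectors) ∨
            ∃ s m b, ∃ x ∈ U, ρ.E s m b x ∉ ρ.trivVectors) ∧
          ∀ U' : Submodule ℂ V, ρ.trivVectors ≤ U' → U' ≤ U → ρ.Invariant U' →
            U' = ρ.trivVectors ∨ U' = U)) := by
  have hirr : ρ.trivVectors = ⊥ → ∃ U : Submodule ℂ V, U ≠ ⊥ ∧ ρ.Invariant U ∧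
      (∀ U' : Submodule ℂ V, U' ≤ U → ρ.Invariant U' → U' = ⊥ ∨ U' = U) ∧
      ((∃ u r b, ∃ x ∈ U, ρ.D u r b x ≠ 0) ∨ ∃ s m b, ∃ x ∈ U, ρ.E s m b x ≠ 0) := by
    intro hT
    obtain ⟨U, hU, hUT, hmin⟩ := ρ.exists_minimal_not_le_trivVectors hn hw hub (by
      obtain ⟨x, hx⟩ := hne
      rw [hT]
      exact fun h => hx ((Submodule.mem_bot ℂ).1 (h ▸ Submodule.mem_top)))
    refine ⟨U, fun h => hUT (h ▸ bot_le), hU, fun U' hle hU' => ?_, ?_⟩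
    · simpa [hT] using hmin U' hle hU'
    · by_contra! hcon
      exact hUT fun x hx => ⟨fun u r b => hcon.1 u r b x hx, fun s m b => hcon.2 s m b x hx⟩
  refine ⟨?_, fun h0 => ?_, fun _ => ?_⟩
  · by_cases hT : ρ.trivVectors = ⊥
    · obtain ⟨U, h1, h2, h3, -⟩ := hirr hT
      exact ⟨U, h1, h2, h3⟩
    · obtain ⟨x, hx, hx0⟩ := Submodule.exists_mem_ne_zero_of_ne_bot hT
      refine ⟨ℂ ∙ x, by simpa using hx0, ?_, fun U' hle _ => ?_⟩
      · have hle : ℂ ∙ x ≤ ρ.trivVectors := (Submodule.span_singleton_le_iff_mem _ _).2 hx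
        exact ⟨fun u r b y hy => by rw [(hle hy).1]; exact zero_mem _,
          fun s m b y hy => by rw [(hle hy).2]; exact zero_mem _⟩
      · exact (nonzero_span_atom x hx0).le_iff.1 hle
  · have hT : ρ.trivVectors = ⊥ := le_bot_iff.1 (h0 ▸ ρ.trivVectors_le_weightSpace)
    refine ⟨fun hfd => ?_, hirr hT⟩
    obtain ⟨x, hx⟩ := hne
    have := ρ.trivVectors_eq_top_of_finiteDimensional hn hw hub
    rw [hT] at this
    exact hx ((Submodule.mem_bot ℂ).1 (this ▸ Submodule.mem_top))
  · by_cases hfd : FiniteDimensional ℂ V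
    · exact Or.inl ⟨hfd, fun x => by
        rw [ρ.trivVectors_eq_top_of_finiteDimensional hn hw hub]; trivial⟩
    refine Or.inr ⟨hfd, ?_⟩
    obtain ⟨U, hU, hUT, hmin⟩ := ρ.exists_minimal_not_le_trivVectors hn hw hub (by
      intro hT
      obtain ⟨N, hN⟩ := hub
      have h00 : ρ.weightSpace 0 0 = ⊤ := top_le_iff.1 (hT ▸ ρ.trivVectors_le_weightSpace)
      have h1 := (hN 0 0).trans_lt Cardinal.natCast_lt_aleph0
      rw [h00, rank_top] at h1
      exact hfd (Module.rank_lt_aleph0_iff.1 h1))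
    have hT := ρ.invariant_trivVectors
    refine ⟨ρ.trivVectors ⊔ U, left_lt_sup.2 hUT, ⟨fun u r b => ?_, fun s m b => ?_⟩, ?_, ?_⟩
    · exact (sup_le (fun x hx => Submodule.mem_sup_left (hT.1 u r b x hx))
        (fun x hx => Submodule.mem_sup_right (hU.1 u r b x hx)) :
        ρ.trivVectors ⊔ U ≤ (ρ.trivVectors ⊔ U).comap (ρ.D u r b))
    · exact (sup_le (fun x hx => Submodule.mem_sup_left (hT.2 s m b x hx))
        (fun x hx => Submodule.mem_sup_right (hU.2 s m b x hx)) :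
        ρ.trivVectors ⊔ U ≤ (ρ.trivVectors ⊔ U).comap (ρ.E s m b))
    · by_contra! hcon
      exact hUT fun x hx => ρ.mem_trivVectors_of_forall_mem hn
        (fun u r => hcon.1 u r 1 x (Submodule.mem_sup_right hx))
        (fun s m => hcon.2 s m 1 x (Submodule.mem_sup_right hx))
    · intro U' hTU' hU'le hU'
      have hmod : U' = ρ.trivVectors ⊔ U ⊓ U' := by
        rw [← sup_inf_assoc_of_le U hTU', inf_eq_right.2 hU'le]
      rcases hmin (U ⊓ U') inf_le_left ⟨fun u r b x hx => ⟨hU.1 u r b x hx.1, hU'.1 u r b x hx.2⟩,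
        fun s m b x hx => ⟨hU.2 s m b x hx.1, hU'.2 s m b x hx.2⟩⟩ with h | h
      · left
        rw [hmod, sup_eq_left.2 h]
      · right
        rw [hmod, h]
end
end
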